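/- Under the standing assumptions, for all x ∈ X and s > 0, the 2-dimensional Hausdorff measure in the metric q of the ball B_q(x,s) satisfies H²_q(B_q(x,s)) ≤ 2π C_S² C_D⁴ C_W² s², where C_S = 16 C_W C_D^{28+16⌈log₂ λ⌉} and H²_q is normalized so that it coincides with Lebesgue measure when q is the Euclidean metric on ℝ². -/

import Mathlib

open Metric MeasureTheory Set Filter Topology UniformSpace ENNReal
open scoped NNReal

noncomputable section

/-- The set `B_{xy} = B(x, d(x,y)) ∪ B(y, d(x,y))`. -/
def pairBall {X : Type*} [MetricSpace X] (x y : X) : Set X :=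
  Metric.ball x (dist x y) ∪ Metric.ball y (dist x y)

/-- A `δ`-chain from `x` to `y`: a finite sequence `z 0 = x, …, z m = y` with
consecutive distances at most `δ`. -/
def IsDeltaChain {X : Type*} [MetricSpace X] (δ : ℝ) (x y : X) (z : ℕ → X) (m : ℕ) : Prop :=
  z 0 = x ∧ z m = y ∧ ∀ j < m, dist (z j) (z (j + 1)) ≤ δ

/-- `q^δ_{μ,s}(x,y)`: infimum of `∑ μ(B_{x_j x_{j-1}})^{1/s}` over `δ`-chains from `x` to `y`. -/
def qDelta {X : Type*} [MetricSpace X] [MeasurableSpace X]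
    (μ : Measure X) (s δ : ℝ) (x y : X) : ℝ≥0∞ :=
  ⨅ (m : ℕ) (z : ℕ → X) (_ : IsDeltaChain δ x y z m),
    ∑ j ∈ Finset.range m, μ (pairBall (z j) (z (j + 1))) ^ (1 / s)

/-- `q_{μ,s}(x,y) = limsup_{δ → 0⁺} q^δ_{μ,s}(x,y)`. -/
def qmu {X : Type*} [MetricSpace X] [MeasurableSpace X]
    (μ : Measure X) (s : ℝ) (x y : X) : ℝ≥0∞ :=
  Filter.limsup (fun δ => qDelta μ s δ x y) (nhdsWithin (0 : ℝ) (Set.Ioi 0))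

/-- `μ` is a doubling measure with constant `CD`: balls have positive finite measure and
`μ(B(x,2r)) ≤ CD · μ(B(x,r))`. -/
def IsDoublingWith {X : Type*} [MetricSpace X] [MeasurableSpace X]
    (μ : Measure X) (CD : ℝ≥0) : Prop :=
  (∀ (x : X) (r : ℝ), 0 < r → 0 < μ (Metric.ball x r) ∧ μ (Metric.ball x r) < ⊤) ∧
    ∀ (x : X) (r : ℝ), 0 < r → μ (Metric.ball x (2 * r)) ≤ CD * μ (Metric.ball x r)

/-- `μ` is a `CW`-weak metric doubling measure of dimension `s`:
`μ(B_{xy})^{1/s} ≤ CW · q_{μ,s}(x,y)` for all `x, y`. -/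
def IsWMDM {X : Type*} [MetricSpace X] [MeasurableSpace X]
    (μ : Measure X) (s : ℝ) (CW : ℝ≥0) : Prop :=
  ∀ x y : X, μ (pairBall x y) ^ (1 / s) ≤ CW * qmu μ s x y

/-- A continuum is a compact connected set. -/
def IsContinuum {X : Type*} [TopologicalSpace X] (K : Set X) : Prop :=
  IsCompact K ∧ IsConnected K

/-- `X` is `λ`-linearly locally connected. -/
def IsLLC (X : Type*) [MetricSpace X] (lam : ℝ) : Prop :=
  ∀ (x : X) (r : ℝ), 0 < r →
    (∀ y ∈ Metric.ball x r, ∀ z ∈ Metric.ball x r,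
      ∃ K : Set X, IsContinuum K ∧ K ⊆ Metric.ball x (lam * r) ∧ y ∈ K ∧ z ∈ K) ∧
    (∀ y z : X, y ∉ Metric.ball x r → z ∉ Metric.ball x r →
      ∃ K : Set X, IsContinuum K ∧ K ⊆ (Metric.ball x (r / lam))ᶜ ∧ y ∈ K ∧ z ∈ K)

/-- The sphere `S²`, with the metric inherited from `ℝ³`. -/
abbrev Sphere2 : Set (EuclideanSpace ℝ (Fin 3)) := Metric.sphere 0 1

/-- A circle domain in `S²`: an open connected set each of whose complementary
connected components is a point or a round closed disk (a closed metric ball). -/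
def IsCircleDomainS2 (Ω : Set ↥Sphere2) : Prop :=
  IsOpen Ω ∧ IsConnected Ω ∧ ∀ p ∈ Ωᶜ,
    connectedComponentIn Ωᶜ p = {p} ∨
      ∃ (c : ↥Sphere2) (ρ : ℝ), 0 < ρ ∧ connectedComponentIn Ωᶜ p = Metric.closedBall c ρ

/-- A circle domain in the plane. -/
def IsCircleDomainC (Ω : Set ℂ) : Prop :=
  IsOpen Ω ∧ IsConnected Ω ∧ ∀ p ∈ Ωᶜ,
    connectedComponentIn Ωᶜ p = {p} ∨
      ∃ (c : ℂ) (ρ : ℝ), 0 < ρ ∧ connectedComponentIn Ωᶜ p = Metric.closedBall c ρ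

/-- The residual set `X̄ ∖ X` inside the completion of `X`. -/
def resid (X : Type*) [MetricSpace X] : Set (Completion X) :=
  (Set.range ((↑) : X → Completion X))ᶜ

/-- The collection of connected components of `X̄ ∖ X`. -/
def residComps (X : Type*) [MetricSpace X] : Set (Set (Completion X)) :=
  {C | ∃ p ∈ resid X, C = connectedComponentIn (resid X) p}

/-- Distance between two sets. -/
def setSetDist {Z : Type*} [MetricSpace Z] (A B : Set Z) : ℝ :=
  sInf (Set.image2 dist A B)

/-- `f` is `η`-quasisymmetric, for a homeomorphism `η` of `[0,∞)`. -/
def IsQSWith {X Y : Type*} [MetricSpace X] [MetricSpace Y]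
    (η : ℝ≥0 ≃ₜ ℝ≥0) (f : X → Y) : Prop :=
  ∀ x y z : X, x ≠ z →
    nndist (f x) (f y) ≤ η (nndist x y / nndist x z) * nndist (f x) (f z)

/-- `ℓ = ⌈log₂ λ⌉`. -/
def ellOf (lam : ℝ) : ℕ := (Int.ceil (Real.logb 2 lam)).toNat

/-- The constant `C_S = 16 C_W C_D^{28+16⌈log₂ λ⌉}`. -/
def CSconst (lam : ℝ) (CD CW : ℝ≥0) : ℝ≥0∞ :=
  16 * (CW : ℝ≥0∞) * (CD : ℝ≥0∞) ^ (28 + 16 * ellOf lam)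

/-- `K` separates `A` and `B`: `A` and `B` lie in different components of the complement of `K`. -/
def SeparatesSets {X : Type*} [TopologicalSpace X] (K A B : Set X) : Prop :=
  A ⊆ Kᶜ ∧ B ⊆ Kᶜ ∧
    ∀ p ∈ A, ∀ p' ∈ B, connectedComponentIn Kᶜ p ≠ connectedComponentIn Kᶜ p'

/-- A topological disk: a set homeomorphic to an open disk in the plane. -/
def IsTopDisk {X : Type*} [TopologicalSpace X] (U : Set X) : Prop :=
  Nonempty (↥U ≃ₜ ↥(Metric.ball (0 : ℂ) 1))

/-- Lower line integral `∫_γ ρ ds` over `γ : [a,b] → Y`, as a supremum of lower sums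
over partitions of `[a,b]`. -/
def lowerLineIntegral {Y : Type*} [PseudoEMetricSpace Y]
    (ρ : Y → ℝ≥0∞) (γ : ℝ → Y) (a b : ℝ) : ℝ≥0∞ :=
  ⨆ (n : ℕ) (t : ℕ → ℝ) (_ : t 0 = a) (_ : t n = b) (_ : ∀ j < n, t j ≤ t (j + 1)),
    ∑ j ∈ Finset.range n,
      (⨅ u ∈ Set.Icc (t j) (t (j + 1)), ρ (γ u)) * edist (γ (t j)) (γ (t (j + 1)))

/-- `γ` (with parameter interval `[0,1]`) is locally rectifiable on the open interval `(0,1)`. -/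
def LocRectifiableOn {Y : Type*} [PseudoEMetricSpace Y] (γ : ℝ → Y) : Prop :=
  ∀ c d : ℝ, 0 < c → c ≤ d → d < 1 → eVariationOn γ (Set.Icc c d) < ⊤

/-- The line integral of `ρ` over the open part of `γ`. -/
def openLineIntegral {Y : Type*} [PseudoEMetricSpace Y] (ρ : Y → ℝ≥0∞) (γ : ℝ → Y) : ℝ≥0∞ :=
  ⨆ (c : ℝ) (d : ℝ) (_ : 0 < c) (_ : c ≤ d) (_ : d < 1), lowerLineIntegral ρ γ c d

/-- `ρ` is admissible for the path family `Γ`. -/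
def IsAdmissible {Y : Type*} [PseudoEMetricSpace Y] (Γ : Set (ℝ → Y)) (ρ : Y → ℝ≥0∞) : Prop :=
  ∀ γ ∈ Γ, LocRectifiableOn γ → 1 ≤ openLineIntegral ρ γ

def borelSpaceBorel (Y : Type*) [TopologicalSpace Y] : @BorelSpace Y _ (borel Y) :=
  @BorelSpace.mk Y _ (borel Y) rfl

/-- The Hausdorff 2-measure of a metric space, normalized to coincide with Lebesgue measure
in the Euclidean plane. -/
def hausdorff2 (Y : Type*) [EMetricSpace Y] : @Measure Y (borel Y) :=
  ENNReal.ofReal (Real.pi / 4) •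
    @Measure.hausdorffMeasure Y _ (borel Y) (borelSpaceBorel Y) 2

/-- The conformal modulus of a path family in a metric space, with respect to the
(normalized) Hausdorff 2-measure. -/
def modulusH2 {Y : Type*} [EMetricSpace Y] (Γ : Set (ℝ → Y)) : ℝ≥0∞ :=
  ⨅ (ρ : Y → ℝ≥0∞) (_ : @Measurable Y ℝ≥0∞ (borel Y) _ ρ) (_ : IsAdmissible Γ ρ),
    @MeasureTheory.lintegral Y (borel Y) (hausdorff2 Y) fun y => ρ y ^ 2

/-- The conformal modulus of a path family in the plane, with respect to Lebesgue area measure. -/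
def modulusC (Γ : Set (ℝ → ℂ)) : ℝ≥0∞ :=
  ⨅ (ρ : ℂ → ℝ≥0∞) (_ : Measurable ρ) (_ : IsAdmissible Γ ρ), ∫⁻ z, ρ z ^ 2

/-- A homeomorphism between metric spaces is `K`-quasiconformal if it distorts moduli of
path families by a factor of at most `K` in both directions. -/
def IsQCWith {Y Z : Type*} [EMetricSpace Y] [EMetricSpace Z] (K : ℝ≥0∞) (f : Y ≃ₜ Z) : Prop :=
  ∀ Γ : Set (ℝ → Y),
    modulusH2 ((fun γ => (f : Y → Z) ∘ γ) '' Γ) ≤ K * modulusH2 Γ ∧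
      modulusH2 Γ ≤ K * modulusH2 ((fun γ => (f : Y → Z) ∘ γ) '' Γ)

/-- The family `Γ(A,B;G)` of paths joining `A` and `B` in `G` (parameter interval `[0,1]`). -/
def joinPaths (A B G : Set ℂ) : Set (ℝ → ℂ) :=
  {γ | ContinuousOn γ (Set.Icc 0 1) ∧ γ 0 ∈ A ∧ γ 1 ∈ B ∧
    γ 0 ∈ closure G ∧ γ 1 ∈ closure G ∧ ∀ u ∈ Set.Ioo (0 : ℝ) 1, γ u ∈ G}

/-- The constant `α = 2^{−2−2M−π²C_W²C_D^{1+log₂ C_X}/(8 log 2)}`. -/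
def alphaConst (M : ℕ) (CD CW : ℝ≥0) (CX : ℝ) : ℝ :=
  (2 : ℝ) ^ (-2 - 2 * (M : ℝ) -
    Real.pi ^ 2 * (CW : ℝ) ^ 2 * (CD : ℝ) ^ ((1 : ℝ) + Real.logb 2 CX) / (8 * Real.log 2))

/-!
The weak metric doubling inequality bounds `μ(B_{xy})^{1/2}` by a multiple of `q(x, y)`. The point
is a local converse: `q(x, y)` is at most a multiple of `μ(B(x, d(x, y)))^{1/2}` when `x` and `y`
are close. Given it, `q` carries `d`-balls to sets of `q`-diameter comparable to `μ^{1/2}`, so a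
covering by small `d`-balls with disjoint halves bounds the Hausdorff measure by `μ`, and the weak
metric doubling inequality bounds the `μ`-measure of a `q`-ball by the square of its radius.

The converse comes from a discrete Loewner estimate. Cover a large ball by balls `A i` of a small
radius and give `A i` the weight `μ(A i)^{1/2}`. If two continua of size `ρ` near `x` could only be
joined by expensive chains, the level sets of the distance from one of them would separate the two
in the intersection graph of the cover. By the Janiszewski theorem some connected piece of a
separating set already separates the continua, and by the second half of linear local connectivity
such a piece has diameter comparable to `ρ`, hence weight at least a multiple of `μ(B(x, ρ))^{1/2}`
by the weak metric doubling inequality. Integrating over the levels and using Cauchy-Schwarz bounds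
the cost of the connection by a multiple of `μ(B(x, ρ))^{1/2}`. Finally `x` and `y` are each joined
to continua of size comparable to `d(x, y)` through a sequence of such connections at geometrically
growing scales, whose costs sum up by reverse doubling.
-/

section Janiszewski

variable {D : Type*} [TopologicalSpace D]

lemma mem_connectedComponentIn_symm {F : Set D} {p q : D} (hq : q ∈ connectedComponentIn F p) :
    p ∈ connectedComponentIn F q := by
  rw [← connectedComponentIn_eq hq]
  exact mem_connectedComponentIn (connectedComponentIn_nonempty_iff.1 ⟨q, hq⟩)

lemma isOpen_diff_connectedComponentIn [LocallyConnectedSpace D] {O : Set D} (hO : IsOpen O)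
    (p : D) : IsOpen (O \ connectedComponentIn O p) := by
  refine isOpen_iff_mem_nhds.2 fun z hz => ?_
  filter_upwards [hO.connectedComponentIn.mem_nhds (mem_connectedComponentIn hz.1)] with v hv
  refine ⟨connectedComponentIn_subset _ _ hv, fun hvp => hz.2 ?_⟩
  rw [connectedComponentIn_eq hvp]
  exact mem_connectedComponentIn_symm hv

lemma frontier_diff_connectedComponentIn_subset [LocallyConnectedSpace D] {O : Set D}
    (hO : IsOpen O) (p : D) : frontier (O \ connectedComponentIn O p) ⊆ Oᶜ := by
  rw [(isOpen_diff_connectedComponentIn hO p).frontier_eq]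
  rintro z ⟨hz, hzQ⟩ hzO
  have hzp : z ∈ connectedComponentIn O p := by_contra fun h => hzQ ⟨hzO, h⟩
  obtain ⟨w, hw, hwQ⟩ := mem_closure_iff.1 hz _ hO.connectedComponentIn hzp
  exact hwQ.2 hw

lemma continuousOn_indicator {Q U : Set D} {f : D → ℝ} (hf : Continuous f)
    (h : ∀ z ∈ U ∩ frontier Q, f z = 0) : ContinuousOn (Q.indicator f) U := by
  classical
  exact ContinuousOn.piecewise h hf.continuousOn continuousOn_const

/- Both `a` and `b` differ from a global lift of `exp ∘ a = exp ∘ b` by locally constant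
functions. -/
lemma sub_eq_sub_of_circleExp_eq [SimplyConnectedSpace D] [LocallyPathConnectedSpace D]
    {U V : Set D} (hU : IsOpen U) (hV : IsOpen V) (hUV : U ∪ V = univ) {a b : D → ℝ}
    (ha : ContinuousOn a U) (hb : ContinuousOn b V)
    (hab : ∀ z, Circle.exp (a z) = Circle.exp (b z)) {p q : D}
    (hqU : q ∈ connectedComponentIn U p) (hqV : q ∈ connectedComponentIn V p) :
    a q - a p = b q - b p := by
  have hcont : Continuous fun z => Circle.exp (a z) := by
    rw [← continuousOn_univ, ← hUV]
    refine (Circle.exp.continuous.comp_continuousOn ha).union_of_isOpen ?_ hU hV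
    exact (Circle.exp.continuous.comp_continuousOn hb).congr fun z _ => hab z
  obtain ⟨ψ, ⟨-, hψ⟩, -⟩ :=
    Circle.isCoveringMap_exp.existsUnique_continuousMap_lifts ⟨_, hcont⟩ p (a p) rfl
  have hψ (z : D) : Circle.exp (ψ z) = Circle.exp (a z) := congrFun hψ z
  have hconst {W : Set D} {c : D → ℝ} (hc : ContinuousOn c W)
      (hψc : ∀ z, Circle.exp (ψ z) = Circle.exp (c z)) (hqW : q ∈ connectedComponentIn W p) :
      ψ q - c q = ψ p - c p := by
    have hsub := connectedComponentIn_subset W p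
    refine Circle.isCoveringMap_exp.constOn_of_comp (g := fun z => ψ z - c z)
      isPreconnected_connectedComponentIn (ψ.continuous.continuousOn.sub (hc.mono hsub))
      (fun z _ w _ => ?_) hqW
      (mem_connectedComponentIn (connectedComponentIn_nonempty_iff.1 ⟨q, hqW⟩))
    simp only [Circle.exp_sub, hψc, div_self']
  linarith [hconst ha hψ hqU, hconst hb (fun z => (hψ z).trans (hab z)) hqV]

/-- Janiszewski's theorem. If `Q` is the part of the complement outside the component of `p` and `φ`
is a Urysohn function with `φ = 0` on `S₁` and `φ = 1` on `S₂`, then `2πφ` and `2π(φ - 1)`, set to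
zero outside `Q`, are lifts of the same circle-valued map over `S₂ᶜ` and `S₁ᶜ`, and they differ by
`2π` on `Q` but agree at `p`. -/
theorem mem_connectedComponentIn_compl_union [SimplyConnectedSpace D]
    [LocallyPathConnectedSpace D] [NormalSpace D] {S₁ S₂ : Set D} (h₁ : IsClosed S₁)
    (h₂ : IsClosed S₂) (hd : Disjoint S₁ S₂) {p q : D} (hq₁ : q ∈ connectedComponentIn S₁ᶜ p)
    (hq₂ : q ∈ connectedComponentIn S₂ᶜ p) : q ∈ connectedComponentIn (S₁ ∪ S₂)ᶜ p := by
  by_contra hq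
  set O := (S₁ ∪ S₂)ᶜ with hOdef
  set Q := O \ connectedComponentIn O p
  have hfr : frontier Q ⊆ S₁ ∪ S₂ := by
    simpa only [hOdef, compl_compl] using
      frontier_diff_connectedComponentIn_subset (h₁.union h₂).isOpen_compl p
  have hqQ : q ∈ Q := by
    refine ⟨?_, hq⟩
    rw [hOdef, compl_union]
    exact ⟨connectedComponentIn_subset _ _ hq₁, connectedComponentIn_subset _ _ hq₂⟩
  have hpQ : p ∉ Q := fun hp => hp.2 (mem_connectedComponentIn hp.1)
  obtain ⟨φ, hφ₁, hφ₂, -⟩ := exists_continuous_zero_one_of_isClosed h₁ h₂ hd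
  have hjump := sub_eq_sub_of_circleExp_eq (U := S₂ᶜ) (V := S₁ᶜ)
    (a := Q.indicator fun z => 2 * Real.pi * φ z)
    (b := Q.indicator fun z => 2 * Real.pi * (φ z - 1)) h₂.isOpen_compl h₁.isOpen_compl
    (by rw [← compl_inter, inter_comm, hd.inter_eq, compl_empty])
    (continuousOn_indicator (by fun_prop) fun z hz => by
      simp [hφ₁ ((hfr hz.2).resolve_right hz.1)])
    (continuousOn_indicator (by fun_prop) fun z hz => by
      simp [hφ₂ ((hfr hz.2).resolve_left hz.1)])
    (fun z => by by_cases hz : z ∈ Q <;> simp [hz, mul_sub, Circle.exp_sub]) hq₂ hq₁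
  simp only [indicator_of_mem hqQ, indicator_of_notMem hpQ] at hjump
  linarith [Real.pi_pos]

theorem mem_connectedComponentIn_compl_biUnion [SimplyConnectedSpace D]
    [LocallyPathConnectedSpace D] [NormalSpace D] {κ : Type*} {S : κ → Set D} {s : Set κ}
    (hs : s.Finite) (hS : ∀ k ∈ s, IsClosed (S k)) (hd : s.PairwiseDisjoint S) {p q : D}
    (hq : ∀ k ∈ s, q ∈ connectedComponentIn (S k)ᶜ p) :
    q ∈ connectedComponentIn (⋃ k ∈ s, S k)ᶜ p := by
  induction s, hs using Set.Finite.induction_on with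
  | empty => simp [connectedComponentIn_univ, PreconnectedSpace.connectedComponent_eq_univ]
  | @insert k s hk hs ih =>
    simp only [mem_insert_iff, forall_eq_or_imp] at hS hq
    rw [pairwiseDisjoint_insert_of_notMem hk] at hd
    rw [biUnion_insert]
    exact mem_connectedComponentIn_compl_union hS.1 (hs.isClosed_biUnion hS.2)
      (disjoint_iUnion₂_right.2 hd.2) hq.1 (ih hS.2 hd.1 hq.2)

end Janiszewski

section ChartBalls

lemma isPreconnected_compl_closedBall {E : Type*} [NormedAddCommGroup E] [NormedSpace ℝ E]
    (hE : 1 < Module.rank ℝ E) : IsPreconnected (closedBall (0 : E) 1)ᶜ := by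
  have himage : (closedBall (0 : E) 1)ᶜ =
      (fun p : ℝ × E => p.1 • p.2) '' (Ioi (1 : ℝ) ×ˢ sphere (0 : E) 1) := by
    ext v
    simp only [mem_compl_iff, mem_closedBall, dist_zero_right, not_le, mem_image, mem_prod,
      mem_Ioi, mem_sphere, Prod.exists]
    constructor
    · intro hv
      have hv0 : ‖v‖ ≠ 0 := (one_pos.trans hv).ne'
      exact ⟨‖v‖, ‖v‖⁻¹ • v, ⟨hv, by rw [norm_smul, norm_inv, norm_norm, inv_mul_cancel₀ hv0]⟩,
        smul_inv_smul₀ hv0 v⟩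
    · rintro ⟨a, b, ⟨ha, hb⟩, rfl⟩
      rw [norm_smul, hb, mul_one, Real.norm_eq_abs]
      exact ha.trans_le (le_abs_self a)
  rw [himage]
  exact (isPreconnected_Ioi.prod (isPreconnected_sphere hE 0 1)).image _ (by fun_prop)

/- The component of `p` has compact closure, so its image is relatively clopen off `S`. -/
lemma mem_connectedComponentIn_preimage_of_subset_isCompact {E X : Type*} [TopologicalSpace E]
    [LocallyConnectedSpace E] [TopologicalSpace X] [T2Space X] {j : E → X}
    (hj : IsOpenEmbedding j) {S : Set X} (hS : IsClosed S) {K : Set E} (hK : IsCompact K)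
    (hSK : S ⊆ j '' K) {p q : E} (hq : j q ∈ connectedComponentIn Sᶜ (j p))
    (hpK : connectedComponentIn (j ⁻¹' S)ᶜ p ⊆ K) : q ∈ connectedComponentIn (j ⁻¹' S)ᶜ p := by
  set O := (j ⁻¹' S)ᶜ
  set W := connectedComponentIn O p
  have hOo : IsOpen O := (hS.preimage hj.continuous).isOpen_compl
  have hpS : j p ∈ Sᶜ := connectedComponentIn_nonempty_iff.1 ⟨_, hq⟩
  have hWS : IsClosed (W ∪ j ⁻¹' S) := by
    rw [← isOpen_compl_iff, compl_union, inter_comm]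
    exact isOpen_diff_connectedComponentIn hOo p
  have hSK' : j ⁻¹' S ⊆ K := (preimage_mono hSK).trans (hj.injective.preimage_image K).subset
  have hclosed : IsClosed (j '' (W ∪ j ⁻¹' S)) :=
    ((hK.of_isClosed_subset hWS (union_subset hpK hSK')).image hj.continuous).isClosed
  have hsub : connectedComponentIn Sᶜ (j p) ⊆ j '' W := by
    refine isPreconnected_connectedComponentIn.subset_left_of_subset_union
      (hj.isOpenMap _ hOo.connectedComponentIn) hclosed.isOpen_compl ?_ ?_
      ⟨j p, mem_connectedComponentIn hpS, mem_image_of_mem j (mem_connectedComponentIn hpS)⟩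
    · exact disjoint_compl_right_iff_subset.2 (image_mono subset_union_left)
    · rintro z hz
      by_cases hzj : z ∈ j '' (W ∪ j ⁻¹' S)
      · obtain ⟨v, hv | hv, rfl⟩ := hzj
        · exact Or.inl (mem_image_of_mem j hv)
        · exact absurd hv (connectedComponentIn_subset _ _ hz)
      · exact Or.inr hzj
  exact hj.injective.mem_set_image.1 (hsub hq)

variable {E X : Type*} [NormedAddCommGroup E] [NormedSpace ℝ E] [ProperSpace E]
  [TopologicalSpace X] [T2Space X]

theorem mem_connectedComponentIn_preimage_compl (hE : 1 < Module.rank ℝ E) {j : E → X}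
    (hj : IsOpenEmbedding j) {S : Set X} (hS : IsClosed S) (hSj : S ⊆ j '' closedBall 0 1)
    {p q : E} (hq : j q ∈ connectedComponentIn Sᶜ (j p)) :
    q ∈ connectedComponentIn (j ⁻¹' S)ᶜ p := by
  have hcompact : IsCompact (closedBall (0 : E) 1) := isCompact_closedBall 0 1
  have hring : (closedBall (0 : E) 1)ᶜ ⊆ (j ⁻¹' S)ᶜ := compl_subset_compl.2 <|
    (preimage_mono hSj).trans (hj.injective.preimage_image _).subset
  by_cases hp : connectedComponentIn (j ⁻¹' S)ᶜ p ⊆ closedBall 0 1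
  · exact mem_connectedComponentIn_preimage_of_subset_isCompact hj hS hcompact hSj hq hp
  by_cases hq' : connectedComponentIn (j ⁻¹' S)ᶜ q ⊆ closedBall 0 1
  · exact mem_connectedComponentIn_symm <| mem_connectedComponentIn_preimage_of_subset_isCompact
      hj hS hcompact hSj (mem_connectedComponentIn_symm hq) hq'
  obtain ⟨z, hz, hz'⟩ := not_subset.1 hp
  obtain ⟨w, hw, hw'⟩ := not_subset.1 hq'
  have hwz := (isPreconnected_compl_closedBall hE).subset_connectedComponentIn hz' hring hw'
  rw [connectedComponentIn_eq hz, connectedComponentIn_eq hwz]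
  exact mem_connectedComponentIn_symm hw

lemma mem_connectedComponentIn_preimage_of_subset_range {D X : Type*} [TopologicalSpace D]
    [TopologicalSpace X] {j : D → X} (hj : IsInducing j) {U : Set X} (hU : U ⊆ range j) {p q : D}
    (hq : j q ∈ connectedComponentIn U (j p)) : q ∈ connectedComponentIn (j ⁻¹' U) p := by
  have hsub := connectedComponentIn_subset U (j p)
  refine IsPreconnected.subset_connectedComponentIn (s := j ⁻¹' connectedComponentIn U (j p))
    ?_ ?_ (preimage_mono hsub) hq
  · rw [← hj.isPreconnected_image, image_preimage_eq_of_subset (hsub.trans hU)]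
    exact isPreconnected_connectedComponentIn
  · exact mem_connectedComponentIn (connectedComponentIn_nonempty_iff.1 ⟨_, hq⟩)

variable (E) in
/-- The set `S` is contained in a coordinate ball modelled on the normed space `E`: in the image of
the closed unit ball under an open embedding of the whole of `E`. -/
def IsInChartBall (S : Set X) : Prop :=
  ∃ j : E → X, IsOpenEmbedding j ∧ S ⊆ j '' closedBall 0 1

open scoped Function in
theorem mem_connectedComponentIn_diff_iUnion (hE : 1 < Module.rank ℝ E) {U : Set X}
    (hU : IsOpen U) (hUE : IsInChartBall E U) {κ : Type*} [Finite κ] {S : κ → Set X}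
    (hS : ∀ k, IsClosed (S k)) (hd : Pairwise (Disjoint on S)) {p q : X}
    (hq : ∀ k, q ∈ connectedComponentIn (S k)ᶜ p)
    (hqU : q ∈ connectedComponentIn (U \ ⋃ k ∈ {k | ¬ S k ⊆ U}, S k) p) :
    q ∈ connectedComponentIn (U \ ⋃ k, S k) p := by
  obtain ⟨j, hj, hUj⟩ := hUE
  have hUr : U ⊆ range j := hUj.trans (image_subset_range _ _)
  set B := ⋃ k ∈ {k | ¬ S k ⊆ U}, S k with hB
  have hpUB : p ∈ U \ B := connectedComponentIn_nonempty_iff.1 ⟨q, hqU⟩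
  obtain ⟨p, rfl⟩ := hUr hpUB.1
  obtain ⟨q, rfl⟩ := hUr (connectedComponentIn_subset _ _ hqU).1
  have hB' : q ∈ connectedComponentIn (j ⁻¹' (Uᶜ ∪ B))ᶜ p := by
    rw [← preimage_compl, compl_union, compl_compl]
    exact mem_connectedComponentIn_preimage_of_subset_range hj.isInducing
      (inter_subset_left.trans hUr) hqU
  have hinner : q ∈ connectedComponentIn (⋃ k ∈ {k | S k ⊆ U}, j ⁻¹' S k)ᶜ p :=
    mem_connectedComponentIn_compl_biUnion (toFinite _) (fun k _ => (hS k).preimage hj.continuous)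
      (fun k _ l _ hkl => (hd hkl).preimage j)
      fun k hk => mem_connectedComponentIn_preimage_compl hE hj (hS k) (hk.trans hUj) (hq k)
  have hBclosed : IsClosed (Uᶜ ∪ B) :=
    hU.isClosed_compl.union ((toFinite _).isClosed_biUnion fun k _ => hS k)
  have hdisj : Disjoint (j ⁻¹' (Uᶜ ∪ B)) (⋃ k ∈ {k | S k ⊆ U}, j ⁻¹' S k) := by
    refine disjoint_iUnion₂_right.2 fun k hk => Disjoint.preimage j (disjoint_union_left.2
      ⟨disjoint_compl_left_iff_subset.2 hk, disjoint_iUnion₂_left.2 fun l hl => hd ?_⟩)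
    rintro rfl
    exact hl hk
  have hboth := mem_connectedComponentIn_compl_union (hBclosed.preimage hj.continuous)
    ((toFinite _).isClosed_biUnion fun k _ => (hS k).preimage hj.continuous) hdisj hB' hinner
  refine connectedComponentIn_mono _ ?_
    (hj.continuous.continuousOn.mapsTo_connectedComponentIn
      (connectedComponentIn_nonempty_iff.1 ⟨q, hboth⟩) hboth)
  rintro _ ⟨z, hz, rfl⟩
  simp only [mem_compl_iff, mem_union, not_or, mem_iUnion, mem_preimage, hB, not_not,
    mem_ofPred_eq, Set.mem_sdiff] at hz ⊢
  exact ⟨hz.1.1, fun ⟨k, hk⟩ => by_cases (fun h : S k ⊆ U => hz.2 ⟨k, h, hk⟩)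
    fun h => hz.1.2 ⟨k, h, hk⟩⟩

lemma exists_closedBall_isInChartBall {E X : Type*} [NormedAddCommGroup E] [NormedSpace ℝ E]
    [MetricSpace X] [ChartedSpace E X] (x : X) :
    ∃ R : ℝ, 0 < R ∧ IsInChartBall E (closedBall x R) := by
  let φ := chartAt E x
  obtain ⟨r, hr, hrφ⟩ := Metric.isOpen_iff.1 φ.open_target _ (mem_chart_target E x)
  let u := OpenPartialHomeomorph.univBall (φ x) r
  have hu : u.source = univ := OpenPartialHomeomorph.univBall_source _ _
  have hmem (v : E) : u v ∈ φ.target :=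
    hrφ (OpenPartialHomeomorph.univBall_target (φ x) hr ▸ u.map_source (hu ▸ mem_univ v))
  have hj : IsOpenEmbedding (u.trans φ.symm) := by
    refine (u.trans φ.symm).isOpenEmbedding ?_
    rw [OpenPartialHomeomorph.trans_source, hu, univ_inter, eq_univ_iff_forall]
    exact hmem
  have hj0 : u.trans φ.symm 0 = x := by
    simp [u, OpenPartialHomeomorph.univBall_apply_zero, φ]
  have hnhds : u.trans φ.symm '' closedBall 0 1 ∈ 𝓝 x :=
    hj0 ▸ hj.isOpenMap.image_mem_nhds (closedBall_mem_nhds 0 one_pos)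
  obtain ⟨R, hR, hRsub⟩ := Metric.nhds_basis_closedBall.mem_iff.1 hnhds
  exact ⟨R, hR, _, hj, hRsub⟩

end ChartBalls

section Clumps

variable {ι X : Type*} {A : ι → Set X}

/-- The intersection graph of a family of sets. -/
def overlapGraph (A : ι → Set X) : SimpleGraph ι where
  Adj i k := i ≠ k ∧ (A i ∩ A k).Nonempty
  symm := ⟨fun _ _ h => ⟨h.1.symm, inter_comm _ _ ▸ h.2⟩⟩
  loopless := ⟨fun _ h => h.1 rfl⟩

/-- The union of the sets of the family `A` that belong to one component of its intersection
graph. -/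
def clump (A : ι → Set X) (c : (overlapGraph A).ConnectedComponent) : Set X :=
  ⋃ i ∈ c.supp, A i

lemma overlapGraph_reachable_of_inter_nonempty {i k : ι} (h : (A i ∩ A k).Nonempty) :
    (overlapGraph A).Reachable i k := by
  rcases eq_or_ne i k with rfl | hik
  · exact SimpleGraph.Reachable.refl _
  · exact SimpleGraph.Adj.reachable ⟨hik, h⟩

lemma isClosed_clump [Finite ι] [TopologicalSpace X] (hA : ∀ i, IsClosed (A i))
    (c : (overlapGraph A).ConnectedComponent) : IsClosed (clump A c) :=
  (toFinite _).isClosed_biUnion fun i _ => hA i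

lemma disjoint_clump {c d : (overlapGraph A).ConnectedComponent} (hcd : c ≠ d) :
    Disjoint (clump A c) (clump A d) := by
  simp only [clump, disjoint_iUnion_left, disjoint_iUnion_right]
  rintro k rfl i rfl
  refine disjoint_iff_inter_eq_empty.2 (not_nonempty_iff_eq_empty.1 fun h => hcd ?_)
  exact SimpleGraph.ConnectedComponent.sound (overlapGraph_reachable_of_inter_nonempty h)

lemma iUnion_clump : ⋃ c, clump A c = ⋃ i, A i := by
  simp only [clump, SimpleGraph.ConnectedComponent.mem_supp_iff]
  exact iUnion_comm .. |>.trans (iUnion_congr fun i => by simp)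

end Clumps

section LinearLocalConnectivity

variable {X : Type*} [MetricSpace X] {L : ℝ}

lemma IsLLC.mono {a b : ℝ} (ha : 0 < a) (hab : a ≤ b) (h : IsLLC X a) : IsLLC X b := by
  intro x r hr
  refine ⟨fun y hy z hz => ?_, fun y z hy hz => ?_⟩
  · obtain ⟨K, hK, hKsub, hyz⟩ := (h x r hr).1 y hy z hz
    exact ⟨K, hK, hKsub.trans (ball_subset_ball (by gcongr)), hyz⟩
  · obtain ⟨K, hK, hKsub, hyz⟩ := (h x r hr).2 y z hy hz
    exact ⟨K, hK, hKsub.trans (compl_subset_compl.2 (ball_subset_ball (by gcongr))), hyz⟩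

lemma IsLLC.mem_connectedComponentIn (h : IsLLC X L) {x y z : X} {r : ℝ} {O : Set X}
    (hO : ball x (L * r) ⊆ O) (hy : y ∈ ball x r) (hz : z ∈ ball x r) :
    z ∈ connectedComponentIn O y := by
  obtain ⟨K, hK, hKsub, hyK, hzK⟩ := (h x r (pos_of_mem_ball hy)).1 y hy z hz
  exact hK.2.isPreconnected.subset_connectedComponentIn hyK (hKsub.trans hO) hzK

lemma IsLLC.mem_connectedComponentIn_compl (h : IsLLC X L) {c e f : X} {r : ℝ} (hr : 0 < r)
    {S E F : Set X} (hS : S ⊆ ball c (r / L)) (hE : IsPreconnected E) (hF : IsPreconnected F)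
    (hEr : ¬ E ⊆ ball c r) (hFr : ¬ F ⊆ ball c r) (hES : Disjoint E S) (hFS : Disjoint F S)
    (he : e ∈ E) (hf : f ∈ F) : f ∈ connectedComponentIn Sᶜ e := by
  obtain ⟨e', he', hec⟩ := not_subset.1 hEr
  obtain ⟨f', hf', hfc⟩ := not_subset.1 hFr
  obtain ⟨K, hK, hKsub, heK, hfK⟩ := (h c r hr).2 e' f' hec hfc
  have hKS : K ⊆ Sᶜ := hKsub.trans (compl_subset_compl.2 hS)
  have h1 := hE.subset_connectedComponentIn he (subset_compl_iff_disjoint_right.2 hES) he'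
  have h2 := hK.2.isPreconnected.subset_connectedComponentIn heK hKS hfK
  have h3 := hF.subset_connectedComponentIn hf' (subset_compl_iff_disjoint_right.2 hFS) hf
  rwa [connectedComponentIn_eq h1, connectedComponentIn_eq h2]

lemma not_subset_ball_half {E : Set X} {e₀ e₁ : X} {ρ : ℝ} (he₀ : e₀ ∈ E) (he₁ : e₁ ∈ E)
    (hρ : ρ ≤ dist e₀ e₁) (z : X) : ¬ E ⊆ Metric.ball z (ρ / 2) := by
  intro h
  have h₀ := mem_ball.1 (h he₀)
  have h₁ := mem_ball.1 (h he₁)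
  linarith [dist_triangle_right e₀ e₁ z]

theorem IsLLC.mem_connectedComponentIn_ball_diff_iUnion {V : Type*} [NormedAddCommGroup V]
    [NormedSpace ℝ V] [ProperSpace V] (hV : 1 < Module.rank ℝ V) (hL : 1 ≤ L) (h : IsLLC X L)
    {x : X} {ρ k Λ : ℝ} (hρ : 0 < ρ) (hΛ : L * k + ρ ≤ Λ) (hball : IsInChartBall V (ball x Λ))
    {E F : Set X} (hE : IsPreconnected E) (hF : IsPreconnected F) {e₀ e₁ f₀ f₁ : X}
    (he₀ : e₀ ∈ E) (he₁ : e₁ ∈ E) (hf₀ : f₀ ∈ F) (hf₁ : f₁ ∈ F) (he : ρ ≤ dist e₀ e₁)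
    (hf : ρ ≤ dist f₀ f₁) (he₀x : e₀ ∈ ball x k) (hf₀x : f₀ ∈ ball x k)
    {ι : Type*} [Finite ι] {A : ι → Set X} (hA : ∀ i, IsClosed (A i))
    (hEA : ∀ i, Disjoint E (A i)) (hFA : ∀ i, Disjoint F (A i))
    (hclump : ∀ c, ∃ z, clump A c ⊆ Metric.ball z (ρ / (2 * L))) :
    f₀ ∈ connectedComponentIn (ball x Λ \ ⋃ i, A i) e₀ := by
  have : 0 < L := one_pos.trans_le hL
  rw [← iUnion_clump]
  refine mem_connectedComponentIn_diff_iUnion hV isOpen_ball hball (isClosed_clump hA)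
    (fun _ _ => disjoint_clump) (fun c => ?_) ?_
  · obtain ⟨z, hz⟩ := hclump c
    rw [← div_div] at hz
    exact h.mem_connectedComponentIn_compl (half_pos hρ) hz hE hF
      (not_subset_ball_half he₀ he₁ he z) (not_subset_ball_half hf₀ hf₁ hf z)
      (disjoint_iUnion₂_right.2 fun i _ => hEA i) (disjoint_iUnion₂_right.2 fun i _ => hFA i)
      he₀ hf₀
  · refine h.mem_connectedComponentIn (fun w hw => ⟨?_, ?_⟩) he₀x hf₀x
    · exact ball_subset_ball (by linarith) hw
    · simp only [mem_iUnion, not_exists]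
      intro c hc hwc
      obtain ⟨y, hyc, hy⟩ := not_subset.1 hc
      obtain ⟨z, hz⟩ := hclump c
      have hsmall : ρ / (2 * L) ≤ ρ / 2 := by gcongr; linarith
      have hyz := mem_ball.1 (hz hyc)
      have hwz := mem_ball.1 (hz hwc)
      have hwx := mem_ball.1 hw
      rw [mem_ball, not_lt] at hy
      linarith [dist_triangle y z x, dist_triangle_left z x w]

end LinearLocalConnectivity

section ChainDistance

variable {X : Type*} [MetricSpace X] [MeasurableSpace X] {μ : Measure X} {s δ : ℝ}

/-- The scale `μ(B(x, r))^{1/s}` assigned to a ball by a measure of dimension `s`. -/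
def ballGauge (μ : Measure X) (s : ℝ) (x : X) (r : ℝ) : ℝ≥0∞ := μ (ball x r) ^ (1 / s)

omit [MeasurableSpace X] in
lemma pairBall_comm (x y : X) : pairBall x y = pairBall y x := by
  rw [pairBall, pairBall, dist_comm, union_comm]

omit [MeasurableSpace X] in
lemma pairBall_subset_ball {x y a : X} {r : ℝ} (hx : dist x y + dist x a ≤ r)
    (hy : dist x y + dist y a ≤ r) : pairBall x y ⊆ ball a r :=
  union_subset (ball_subset_ball' hx) (ball_subset_ball' hy)

lemma ballGauge_mono (hs : 0 < s) {x y : X} {r t : ℝ} (h : r + dist x y ≤ t) :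
    ballGauge μ s x r ≤ ballGauge μ s y t :=
  rpow_le_rpow (measure_mono (ball_subset_ball' h)) (by positivity)

lemma rpow_measure_pairBall_le (hs : 0 < s) {x y a : X} {r : ℝ} (hx : dist x y + dist x a ≤ r)
    (hy : dist x y + dist y a ≤ r) : μ (pairBall x y) ^ (1 / s) ≤ ballGauge μ s a r :=
  rpow_le_rpow (measure_mono (pairBall_subset_ball hx hy)) (by positivity)

lemma ballGauge_le_rpow_measure_pairBall (hs : 0 < s) {x y a : X} {r : ℝ}
    (h : r + dist a x ≤ dist x y) : ballGauge μ s a r ≤ μ (pairBall x y) ^ (1 / s) :=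
  rpow_le_rpow (measure_mono ((ball_subset_ball' h).trans subset_union_left)) (by positivity)

lemma rpow_ballGauge (hs : 0 < s) (x : X) (r : ℝ) : ballGauge μ s x r ^ s = μ (ball x r) := by
  rw [ballGauge, ← rpow_mul, one_div_mul_cancel hs.ne', rpow_one]

lemma sq_ballGauge_two (x : X) (r : ℝ) : ballGauge μ 2 x r ^ 2 = μ (ball x r) := by
  rw [← rpow_two, rpow_ballGauge two_pos]

lemma qDelta_self (x : X) : qDelta μ s δ x x = 0 :=
  nonpos_iff_eq_zero.1 <| iInf_le_of_le 0 <| iInf_le_of_le (fun _ => x) <|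
    iInf_le_of_le ⟨rfl, rfl, by simp⟩ (by simp)

lemma qDelta_le_add_rpow_measure_pairBall (x : X) {y z : X} (h : dist y z ≤ δ) :
    qDelta μ s δ x z ≤ qDelta μ s δ x y + μ (pairBall y z) ^ (1 / s) := by
  conv_rhs => rw [qDelta]
  simp only [ENNReal.iInf_add]
  refine le_iInf fun m => le_iInf fun c => le_iInf fun ⟨hc₀, hcm, hc⟩ => ?_
  refine iInf_le_of_le (m + 1) (iInf_le_of_le (fun n => if n ≤ m then c n else z)
    (iInf_le_of_le ⟨by simp [hc₀], by simp, fun j hj => ?_⟩ ?_))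
  · rcases Nat.lt_succ_iff_lt_or_eq.1 hj with hj | rfl
    · simpa only [hj.le, if_true, Nat.succ_le_of_lt hj] using hc j hj
    · simpa [hcm] using h
  · rw [Finset.sum_range_succ]
    refine add_le_add (Finset.sum_le_sum fun j hj => ?_) (by simp [hcm])
    have hj := Finset.mem_range.1 hj
    simp only [hj.le, if_true, Nat.succ_le_of_lt hj, le_rfl]

lemma qDelta_le_rpow_measure_pairBall {y z : X} (h : dist y z ≤ δ) :
    qDelta μ s δ y z ≤ μ (pairBall y z) ^ (1 / s) := by
  simpa [qDelta_self] using qDelta_le_add_rpow_measure_pairBall (μ := μ) (s := s) y h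

lemma qDelta_triangle (x y z : X) :
    qDelta μ s δ x z ≤ qDelta μ s δ x y + qDelta μ s δ y z := by
  conv_rhs => rw [qDelta.eq_def μ s δ y z]
  simp only [ENNReal.add_iInf]
  refine le_iInf fun m => le_iInf fun c => le_iInf fun ⟨hc₀, hcm, hc⟩ => ?_
  have hpartial : ∀ n ≤ m, qDelta μ s δ x (c n) ≤ qDelta μ s δ x y +
      ∑ j ∈ Finset.range n, μ (pairBall (c j) (c (j + 1))) ^ (1 / s) := by
    intro n
    induction n with
    | zero => simp [hc₀]
    | succ k ih =>
      intro hk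
      rw [Finset.sum_range_succ, ← add_assoc]
      exact (qDelta_le_add_rpow_measure_pairBall x (hc k hk)).trans
        (add_le_add_left (ih (by omega)) _)
  exact hcm ▸ hpartial m le_rfl

lemma qDelta_comm (x y : X) : qDelta μ s δ x y = qDelta μ s δ y x := by
  suffices h : ∀ x y : X, qDelta μ s δ y x ≤ qDelta μ s δ x y from le_antisymm (h y x) (h x y)
  intro x y
  conv_rhs => rw [qDelta]
  refine le_iInf fun m => le_iInf fun c => le_iInf fun ⟨hc₀, hcm, hc⟩ => ?_
  have hpartial : ∀ n ≤ m, qDelta μ s δ (c n) x ≤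
      ∑ j ∈ Finset.range n, μ (pairBall (c j) (c (j + 1))) ^ (1 / s) := by
    intro n
    induction n with
    | zero => simp [hc₀, qDelta_self]
    | succ k ih =>
      intro hk
      rw [Finset.sum_range_succ, add_comm (Finset.sum _ _), pairBall_comm]
      exact (qDelta_triangle _ (c k) _).trans (add_le_add
        (qDelta_le_rpow_measure_pairBall (by rw [dist_comm]; exact hc k hk)) (ih (by omega)))
  exact hcm ▸ hpartial m le_rfl

lemma qDelta_anti {δ' : ℝ} (h : δ ≤ δ') (x y : X) : qDelta μ s δ' x y ≤ qDelta μ s δ x y :=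
  le_iInf fun m => le_iInf fun c => le_iInf fun hc => iInf_le_of_le m <| iInf_le_of_le c <|
    iInf_le_of_le ⟨hc.1, hc.2.1, fun j hj => (hc.2.2 j hj).trans h⟩ le_rfl

lemma qmu_le {x y : X} {b : ℝ≥0∞} (h : ∀ δ > 0, qDelta μ s δ x y ≤ b) : qmu μ s x y ≤ b :=
  limsup_le_of_le (h := eventually_nhdsWithin_of_forall h)

lemma qDelta_le_add_ballGauge (hs : 0 < s) {p p' a a' : X} {ε : ℝ}
    (hp : dist a p ≤ δ) (hpε : 2 * dist a p ≤ ε) (hp' : dist a' p' ≤ δ)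
    (hpε' : 2 * dist a' p' ≤ ε) :
    qDelta μ s δ p p' ≤ ballGauge μ s p ε + qDelta μ s δ a a' + ballGauge μ s p' ε := by
  have hnear {a p : X} (hp : dist a p ≤ δ) (hpε : 2 * dist a p ≤ ε) :
      qDelta μ s δ a p ≤ ballGauge μ s p ε :=
    (qDelta_le_rpow_measure_pairBall hp).trans (rpow_measure_pairBall_le hs (by linarith)
      (by rw [dist_self]; linarith [dist_nonneg (x := a) (y := p)]))
  calc qDelta μ s δ p p'
      ≤ qDelta μ s δ p a + qDelta μ s δ a p' := qDelta_triangle _ _ _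
    _ ≤ qDelta μ s δ a p + (qDelta μ s δ a a' + qDelta μ s δ a' p') :=
        add_le_add (qDelta_comm _ _).le (qDelta_triangle _ _ _)
    _ ≤ ballGauge μ s p ε + (qDelta μ s δ a a' + ballGauge μ s p' ε) := by
        gcongr
        exacts [hnear hp hpε, hnear hp' hpε']
    _ = _ := (add_assoc _ _ _).symm

lemma qmu_le_of_tendsto (hs : 0 < s)
    (hsmall : ∀ η : ℝ≥0∞, 0 < η → ∃ ε > 0, ∀ z : X, ballGauge μ s z ε ≤ η)
    {a a' : ℕ → X} {t : ℕ → ℝ} {p p' : X} {b : ℝ≥0∞} (ha : Tendsto a atTop (𝓝 p))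
    (ha' : Tendsto a' atTop (𝓝 p')) (ht : Tendsto t atTop (𝓝 0))
    (hb : ∀ᶠ n in atTop, qDelta μ s (t n) (a n) (a' n) ≤ b) : qmu μ s p p' ≤ b := by
  refine qmu_le fun δ hδ => ENNReal.le_of_forall_pos_le_add fun η hη _ => ?_
  obtain ⟨ε, hε, hball⟩ := hsmall (η / 2) (by simpa using hη.ne')
  have hr : 0 < min δ (ε / 2) := by positivity
  obtain ⟨n, hn, hn', hnt, hbn⟩ := ((Metric.tendsto_nhds.1 ha _ hr).and
    ((Metric.tendsto_nhds.1 ha' _ hr).and ((ht.eventually (gt_mem_nhds hδ)).and hb))).exists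
  rw [lt_min_iff] at hn hn'
  calc qDelta μ s δ p p'
      ≤ ballGauge μ s p ε + qDelta μ s δ (a n) (a' n) + ballGauge μ s p' ε :=
        qDelta_le_add_ballGauge hs hn.1.le (by linarith) hn'.1.le (by linarith)
    _ ≤ η / 2 + b + η / 2 := by
        gcongr
        exacts [hball p, (qDelta_anti hnt.le _ _).trans hbn, hball p']
    _ = b + (η / 2 + η / 2) := by ring
    _ = b + η := by rw [ENNReal.add_halves]

end ChainDistance

section Doubling

variable {X : Type*} [MetricSpace X] [MeasurableSpace X] {μ : Measure X} {CD : ℝ≥0}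

lemma IsDoublingWith.measure_ball_two_pow_mul_le (h : IsDoublingWith μ CD) (n : ℕ) (x : X) {r : ℝ}
    (hr : 0 < r) : μ (Metric.ball x (2 ^ n * r)) ≤ (CD : ℝ≥0∞) ^ n * μ (Metric.ball x r) := by
  induction n with
  | zero => simp
  | succ k ih =>
    calc μ (Metric.ball x (2 ^ (k + 1) * r))
        = μ (Metric.ball x (2 * (2 ^ k * r))) := by rw [pow_succ', mul_assoc]
      _ ≤ CD * μ (Metric.ball x (2 ^ k * r)) := h.2 x _ (by positivity)
      _ ≤ CD * ((CD : ℝ≥0∞) ^ k * μ (Metric.ball x r)) := by gcongr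
      _ = (CD : ℝ≥0∞) ^ (k + 1) * μ (Metric.ball x r) := by rw [pow_succ', mul_assoc]

lemma IsDoublingWith.one_le [Nonempty X] (h : IsDoublingWith μ CD) : (1 : ℝ≥0∞) ≤ CD := by
  obtain ⟨x⟩ := ‹Nonempty X›
  obtain ⟨hpos, hfin⟩ := h.1 x 1 one_pos
  refine (ENNReal.mul_le_mul_iff_left hpos.ne' hfin.ne).1 ?_
  rw [one_mul]
  exact (measure_mono (ball_subset_ball (by norm_num))).trans (h.2 x 1 one_pos)

lemma IsDoublingWith.ballGauge_pos (h : IsDoublingWith μ CD) {s : ℝ} (x : X) {r : ℝ}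
    (hr : 0 < r) : 0 < ballGauge μ s x r :=
  ENNReal.rpow_pos (h.1 x r hr).1 (h.1 x r hr).2.ne

lemma IsDoublingWith.ballGauge_ne_top (h : IsDoublingWith μ CD) {s : ℝ} (hs : 0 < s) (x : X)
    {r : ℝ} (hr : 0 < r) : ballGauge μ s x r ≠ ⊤ :=
  ENNReal.rpow_ne_top_of_nonneg (by positivity) (h.1 x r hr).2.ne

lemma IsDoublingWith.ballGauge_two_four_pow_mul_le (h : IsDoublingWith μ CD) (n : ℕ) (x : X)
    {r : ℝ} (hr : 0 < r) : ballGauge μ 2 x (4 ^ n * r) ≤ (CD : ℝ≥0∞) ^ n * ballGauge μ 2 x r := by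
  rw [← ENNReal.pow_le_pow_left_iff two_ne_zero, mul_pow, sq_ballGauge_two, sq_ballGauge_two,
    ← pow_mul, mul_comm n 2]
  have hfour : (4 : ℝ) ^ n = 2 ^ (2 * n) := by rw [pow_mul]; norm_num
  exact hfour ▸ h.measure_ball_two_pow_mul_le (2 * n) x hr

lemma exists_pos_forall_exists_le_dist (Y : Type*) [MetricSpace Y] [Nontrivial Y] :
    ∃ r > 0, ∀ z : Y, ∃ y, r ≤ dist z y := by
  obtain ⟨a, b, hab⟩ := exists_pair_ne Y
  refine ⟨dist a b / 2, half_pos (dist_pos.2 hab), fun z => ?_⟩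
  by_contra! hz
  linarith [dist_triangle_left a b z, hz a, hz b]

lemma exists_dist_eq_of_le_dist {Y : Type*} [MetricSpace Y] [PreconnectedSpace Y] {x y : Y} {r : ℝ}
    (hr : 0 ≤ r) (hy : r ≤ dist x y) : ∃ z, dist x z = r :=
  intermediate_value_univ x y (continuous_const.dist continuous_id) ⟨by simpa using hr, hy⟩

section Connected

variable [BorelSpace X] [PreconnectedSpace X]

lemma IsDoublingWith.reverse (h : IsDoublingWith μ CD) {x y : X} {ρ : ℝ} (hρ : 0 < ρ)
    (hy : 2 * ρ ≤ dist x y) :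
    ((CD : ℝ≥0∞) ^ 2 + 1) * μ (Metric.ball x ρ) ≤ (CD : ℝ≥0∞) ^ 2 * μ (Metric.ball x (4 * ρ)) := by
  obtain ⟨z, hz⟩ := exists_dist_eq_of_le_dist (by positivity) hy
  have hxz : μ (Metric.ball x ρ) ≤ (CD : ℝ≥0∞) ^ 2 * μ (Metric.ball z ρ) :=
    (measure_mono (ball_subset_ball' (by linarith))).trans
      (h.measure_ball_two_pow_mul_le 2 z hρ)
  have hadd : μ (Metric.ball x ρ) + μ (Metric.ball z ρ) ≤ μ (Metric.ball x (4 * ρ)) := by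
    rw [← measure_union (ball_disjoint_ball (by linarith)) measurableSet_ball]
    exact measure_mono (union_subset (ball_subset_ball (by linarith))
      (ball_subset_ball' (by rw [dist_comm]; linarith)))
  calc ((CD : ℝ≥0∞) ^ 2 + 1) * μ (Metric.ball x ρ)
      = (CD : ℝ≥0∞) ^ 2 * μ (Metric.ball x ρ) + μ (Metric.ball x ρ) := by ring
    _ ≤ (CD : ℝ≥0∞) ^ 2 * μ (Metric.ball x ρ) + (CD : ℝ≥0∞) ^ 2 * μ (Metric.ball z ρ) := by gcongr
    _ = (CD : ℝ≥0∞) ^ 2 * (μ (Metric.ball x ρ) + μ (Metric.ball z ρ)) := by ring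
    _ ≤ _ := by gcongr

lemma IsDoublingWith.reverse_ballGauge_two (h : IsDoublingWith μ CD) {x y : X} {ρ : ℝ}
    (hρ : 0 < ρ) (hy : 2 * ρ ≤ dist x y) :
    (4 * (CD : ℝ≥0∞) ^ 2 + 1) * ballGauge μ 2 x ρ ≤
      4 * (CD : ℝ≥0∞) ^ 2 * ballGauge μ 2 x (4 * ρ) := by
  have : Nonempty X := ⟨x⟩
  have hrev := h.reverse hρ hy
  have hc : (1 : ℝ≥0∞) ≤ (CD : ℝ≥0∞) ^ 2 := one_le_pow₀ h.one_le
  rw [← ENNReal.pow_le_pow_left_iff two_ne_zero, mul_pow, mul_pow, sq_ballGauge_two,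
    sq_ballGauge_two]
  set c := (CD : ℝ≥0∞) ^ 2
  calc (4 * c + 1) ^ 2 * μ (Metric.ball x ρ)
      = (16 * c * c + 8 * c + 1) * μ (Metric.ball x ρ) := by ring
    _ ≤ (16 * c * c + 8 * c + 8 * c) * μ (Metric.ball x ρ) := by
        gcongr
        exact hc.trans (le_mul_of_one_le_left zero_le (by norm_num))
    _ = 16 * c * ((c + 1) * μ (Metric.ball x ρ)) := by ring
    _ ≤ 16 * c * (c * μ (Metric.ball x (4 * ρ))) := by gcongr
    _ = _ := by ring

lemma IsDoublingWith.add_one_le_pow_four [Nontrivial X] (h : IsDoublingWith μ CD) :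
    CD ^ 2 + 1 ≤ CD ^ 4 := by
  obtain ⟨x, y, hxy⟩ := exists_pair_ne X
  have hd := dist_pos.2 hxy
  have hρ : 0 < dist x y / 2 := by positivity
  obtain ⟨hpos, hfin⟩ := h.1 x _ hρ
  have hrev := h.reverse (x := x) (y := y) hρ (by linarith)
  have hmul := calc ((CD : ℝ≥0∞) ^ 2 + 1) * μ (Metric.ball x (dist x y / 2))
      ≤ (CD : ℝ≥0∞) ^ 2 * μ (Metric.ball x (4 * (dist x y / 2))) := hrev
    _ = (CD : ℝ≥0∞) ^ 2 * μ (Metric.ball x (2 ^ 2 * (dist x y / 2))) := by norm_num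
    _ ≤ (CD : ℝ≥0∞) ^ 2 * ((CD : ℝ≥0∞) ^ 2 * μ (Metric.ball x (dist x y / 2))) := by
        gcongr
        exact h.measure_ball_two_pow_mul_le 2 x hρ
    _ = (CD : ℝ≥0∞) ^ 4 * μ (Metric.ball x (dist x y / 2)) := by ring
  exact_mod_cast (ENNReal.mul_le_mul_iff_left hpos.ne' hfin.ne).1 hmul

lemma pow_twelve_ge_of_add_one_le_pow_four {c : ℝ} (h : c ^ 2 + 1 ≤ c ^ 4) :
    (216 : ℝ) ≤ 16 * c ^ 12 := by
  have hc : 1.61 ≤ c ^ 2 := by nlinarith [sq_nonneg c]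
  calc (216 : ℝ) ≤ 16 * 1.61 ^ 6 := by norm_num
    _ ≤ 16 * (c ^ 2) ^ 6 := by gcongr
    _ = 16 * c ^ 12 := by ring

lemma IsDoublingWith.measure_ball_div_four_pow_le (h : IsDoublingWith μ CD) {r : ℝ} (hr : 0 < r)
    {x y : X} (hy : 2 * r ≤ dist x y) (n : ℕ) :
    μ (Metric.ball x (r / 4 ^ n)) ≤ ((CD : ℝ≥0∞) ^ 2 / ((CD : ℝ≥0∞) ^ 2 + 1)) ^ n * μ univ := by
  induction n with
  | zero => simpa using measure_mono (subset_univ _)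
  | succ n ih =>
    have hle : r / 4 ^ (n + 1) ≤ r := div_le_self hr.le (one_le_pow₀ (by norm_num))
    have hrev := h.reverse (ρ := r / 4 ^ (n + 1)) (by positivity)
      ((mul_le_mul_of_nonneg_left hle zero_le_two).trans hy)
    have hfour : 4 * (r / 4 ^ (n + 1)) = r / 4 ^ n := by rw [pow_succ]; field_simp
    rw [hfour, mul_comm, ← ENNReal.le_div_iff_mul_le (by simp) (by simp),
      ENNReal.mul_div_right_comm] at hrev
    rw [pow_succ' (_ / _), mul_assoc]
    exact hrev.trans (by gcongr)

lemma IsDoublingWith.exists_forall_ballGauge_le [Nontrivial X] [IsFiniteMeasure μ]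
    (h : IsDoublingWith μ CD) {s : ℝ} (hs : 0 < s) {η : ℝ≥0∞} (hη : 0 < η) :
    ∃ ε > 0, ∀ z : X, ballGauge μ s z ε ≤ η := by
  obtain ⟨r, hr, hdist⟩ := exists_pos_forall_exists_le_dist X
  set θ := (CD : ℝ≥0∞) ^ 2 / ((CD : ℝ≥0∞) ^ 2 + 1)
  have hθ : θ < 1 := by
    rw [ENNReal.div_lt_iff (by simp) (by simp), one_mul]
    exact ENNReal.lt_add_right (by simp) one_ne_zero
  have hlim : Tendsto (fun n : ℕ => (θ ^ n * μ univ) ^ (1 / s)) atTop (𝓝 0) := by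
    have := (ENNReal.Tendsto.mul_const (ENNReal.tendsto_pow_atTop_nhds_zero_of_lt_one hθ)
      (Or.inr (measure_ne_top μ univ))).ennrpow_const (1 / s)
    rwa [zero_mul, ENNReal.zero_rpow_of_pos (by positivity)] at this
  obtain ⟨n, hn⟩ := (hlim.eventually (ge_mem_nhds hη)).exists
  refine ⟨r / 2 / 4 ^ n, by positivity, fun z => ?_⟩
  obtain ⟨y, hy⟩ := hdist z
  exact (ENNReal.rpow_le_rpow (h.measure_ball_div_four_pow_le (half_pos hr)
    (hy.trans' (by linarith)) n)
    (by positivity)).trans hn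

end Connected

end Doubling

section WeakMetricDoubling

variable {X : Type*} [MetricSpace X] [MeasurableSpace X] {μ : Measure X} {CD CW : ℝ≥0} {s : ℝ}

lemma IsWMDM.exists_forall_ballGauge_le_qDelta (hw : IsWMDM μ s CW) (h : IsDoublingWith μ CD)
    (hs : 0 < s) (hsmall : ∀ η : ℝ≥0∞, 0 < η → ∃ ε > 0, ∀ z : X, ballGauge μ s z ε ≤ η)
    {G : Set X} (hG : IsCompact G) {ρ : ℝ} (hρ : 0 < ρ) :
    ∃ δ > 0, ∀ p ∈ G, ∀ p' ∈ G, ρ ≤ dist p p' →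
      ballGauge μ s p (ρ / 2) ≤ 2 * CW * qDelta μ s δ p p' := by
  -- Counterexamples along `δ → 0` converge to a pair violating `IsWMDM` by a factor of two.
  by_contra! hcon
  choose a ha a' ha' hdist hlt using fun n : ℕ => hcon (1 / ((n : ℝ) + 1)) (by positivity)
  obtain ⟨⟨p, p'⟩, -, φ, hφ, hlim⟩ := (hG.prod hG).tendsto_subseq (x := fun n => (a n, a' n))
    fun n => ⟨ha n, ha' n⟩
  have hp : Tendsto (a ∘ φ) atTop (𝓝 p) := (continuous_fst.tendsto _).comp hlim
  have hp' : Tendsto (a' ∘ φ) atTop (𝓝 p') := (continuous_snd.tendsto _).comp hlim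
  have hpp' : ρ ≤ dist p p' := ge_of_tendsto' (hp.dist hp') fun n => hdist _
  set g := μ (pairBall p p') ^ (1 / s)
  have hgpos : g ≠ 0 := ((h.ballGauge_pos p (hρ.trans_le hpp')).trans_le
    (ballGauge_le_rpow_measure_pairBall hs (by simp))).ne'
  have hgtop : g ≠ ⊤ := ne_top_of_le_ne_top
    (h.ballGauge_ne_top hs p (r := 2 * dist p p') (by linarith))
    (rpow_measure_pairBall_le hs (by linarith [dist_self p]) (by rw [dist_comm p' p, two_mul]))
  have hq : qmu μ s p p' ≤ g / (2 * CW) := by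
    refine qmu_le_of_tendsto hs hsmall hp hp'
      (tendsto_one_div_add_atTop_nhds_zero_nat.comp hφ.tendsto_atTop) ?_
    filter_upwards [Metric.tendsto_nhds.1 hp (ρ / 2) (by positivity)] with n hn
    rw [ENNReal.le_div_iff_mul_le (Or.inr hgpos) (Or.inr hgtop), mul_comm]
    exact (hlt (φ n)).le.trans (ballGauge_le_rpow_measure_pairBall hs
      (by simp only [Function.comp_apply] at hn; linarith))
  have htwo : 2 * g ≤ 1 * g := calc 2 * g
      ≤ 2 * (CW * qmu μ s p p') := by gcongr; exact hw p p'
    _ ≤ 2 * CW * (g / (2 * CW)) := by rw [← mul_assoc]; gcongr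
    _ ≤ 1 * g := by rw [one_mul]; exact ENNReal.mul_div_le
  exact absurd ((ENNReal.mul_le_mul_iff_left hgpos hgtop).1 htwo) (by norm_num)

end WeakMetricDoubling

section DiscreteCoarea

variable {ι : Type*} {G : SimpleGraph ι} (w : ι → ℝ≥0) {S S' : Set ι}

/-- The cost of a walk for the vertex weights `w`; both endpoints are counted. -/
def walkCost {i k : ι} (p : G.Walk i k) : ℝ≥0 := (p.support.map w).sum

/-- Every walk from `S` to `S'` passes through `V`, and `V` avoids `S` and `S'`. -/
def IsSeparator (G : SimpleGraph ι) (S S' V : Set ι) : Prop :=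
  Disjoint V S ∧ Disjoint V S' ∧ ∀ a ∈ S, ∀ b ∈ S', ∀ p : G.Walk a b, ∃ i ∈ p.support, i ∈ V

lemma exists_potential {T : ℝ≥0} (hT : ∀ a ∈ S, ∀ b ∈ S', ∀ p : G.Walk a b, T ≤ walkCost w p) :
    ∃ v : ι → ℝ≥0, (∀ a ∈ S, v a ≤ w a) ∧ (∀ i k, G.Adj i k → v k ≤ v i + w k) ∧
      ∀ b ∈ S', T ≤ v b := by
  let costs (i : ι) : Set ℝ≥0 := insert T {r | ∃ a ∈ S, ∃ p : G.Walk a i, walkCost w p = r}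
  have hne (i : ι) : (costs i).Nonempty := ⟨T, mem_insert _ _⟩
  refine ⟨fun i => sInf (costs i), fun a ha => ?_, fun i k hik => ?_, fun b hb => ?_⟩
  · exact csInf_le' (Or.inr ⟨a, ha, .nil, by simp [walkCost]⟩)
  · rw [← tsub_le_iff_right]
    refine le_csInf (hne i) ?_
    rintro r (rfl | ⟨a, ha, p, rfl⟩) <;> rw [tsub_le_iff_right]
    · exact (csInf_le' (mem_insert _ _)).trans le_self_add
    · exact csInf_le' (Or.inr ⟨a, ha, p.concat hik, by
        simp [walkCost, SimpleGraph.Walk.support_concat]⟩)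
  · refine le_csInf (hne b) ?_
    rintro r (rfl | ⟨a, ha, p, rfl⟩)
    exacts [le_rfl, hT a ha b hb p]

lemma exists_mem_support_lt_le {v : ι → ℝ≥0} (hv : ∀ i k, G.Adj i k → v k ≤ v i + w k) {t : ℝ≥0}
    {i k : ι} (p : G.Walk i k) (hi : v i < t) (hk : t ≤ v k) :
    ∃ m ∈ p.support, t ≤ v m ∧ v m < t + w m := by
  induction p with
  | nil => exact absurd hi hk.not_gt
  | @cons a b c hab p ih =>
    rw [SimpleGraph.Walk.support_cons]
    by_cases hb : v b < t
    · obtain ⟨m, hm, hmt⟩ := ih hb hk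
      exact ⟨m, List.mem_cons_of_mem _ hm, hmt⟩
    · exact ⟨b, List.mem_cons_of_mem _ p.start_mem_support, not_lt.1 hb,
        (hv a b hab).trans_lt (by gcongr)⟩

lemma mul_le_mul_sum_sq_of_forall_mem_Ioc [Fintype ι] (v : ι → ℝ) {a b : ℝ} {g K : ℝ≥0∞}
    (h : ∀ t ∈ Ioc a b,
      g ≤ K * ∑ i, (Ioc (v i - w i) (v i)).indicator (fun _ => (w i : ℝ≥0∞)) t) :
    ENNReal.ofReal (b - a) * g ≤ K * ∑ i, (w i : ℝ≥0∞) ^ 2 := by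
  have hmeas (i : ι) : Measurable ((Ioc (v i - w i) (v i)).indicator fun _ => (w i : ℝ≥0∞)) :=
    measurable_const.indicator measurableSet_Ioc
  calc ENNReal.ofReal (b - a) * g
      = ∫⁻ _ in Ioc a b, g := by rw [setLIntegral_const, Real.volume_Ioc, mul_comm]
    _ ≤ ∫⁻ t in Ioc a b,
          K * ∑ i, (Ioc (v i - w i) (v i)).indicator (fun _ => (w i : ℝ≥0∞)) t :=
        setLIntegral_mono' measurableSet_Ioc h
    _ ≤ ∫⁻ t, K * ∑ i, (Ioc (v i - w i) (v i)).indicator (fun _ => (w i : ℝ≥0∞)) t :=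
        setLIntegral_le_lintegral _ _
    _ = K * ∑ i, ∫⁻ t, (Ioc (v i - w i) (v i)).indicator (fun _ => (w i : ℝ≥0∞)) t := by
        rw [lintegral_const_mul _ (Finset.measurable_fun_sum _ fun i _ => hmeas i),
          lintegral_finsetSum _ fun i _ => hmeas i]
    _ = K * ∑ i, (w i : ℝ≥0∞) ^ 2 := by
        simp only [lintegral_indicator_const measurableSet_Ioc, Real.volume_Ioc,
          _root_.sub_sub_cancel, ofReal_coe_nnreal, sq]

lemma isSeparator_level {T t : ℝ≥0} {v : ι → ℝ≥0} (hw : ∀ i, w i ≤ T / 4)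
    (hvS : ∀ a ∈ S, v a ≤ w a) (hv : ∀ i k, G.Adj i k → v k ≤ v i + w k)
    (hvS' : ∀ b ∈ S', T ≤ v b) (ht : T / 4 < t) (ht' : t + T / 4 ≤ T) :
    IsSeparator G S S' {i | t ≤ v i ∧ v i < t + w i} := by
  have hS {i : ι} (hi : i ∈ S) : v i < t := ((hvS i hi).trans (hw i)).trans_lt ht
  have hS' {i : ι} (hi : i ∈ S') : t + w i ≤ v i :=
    (add_le_add_right (hw i) t).trans (ht'.trans (hvS' i hi))
  refine ⟨disjoint_left.2 fun i hi hiS => (hS hiS).not_ge hi.1,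
    disjoint_left.2 fun i hi hiS' => (hS' hiS').not_gt hi.2, fun a ha b hb p => ?_⟩
  exact exists_mem_support_lt_le w hv p (hS ha) (le_self_add.trans (hS' hb))

/-- Integrate the bound for the level sets of a potential over the levels in `(T/4, 3T/4]`. -/
theorem half_mul_le_mul_sum_sq_of_forall_isSeparator [Fintype ι] {T : ℝ≥0} {g K : ℝ≥0∞}
    (hw : ∀ i, w i ≤ T / 4)
    (hT : ∀ a ∈ S, ∀ b ∈ S', ∀ p : G.Walk a b, T ≤ walkCost w p)
    (hg : ∀ V, IsSeparator G S S' V → g ≤ K * ∑ i, V.indicator (fun i => (w i : ℝ≥0∞)) i) :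
    ((T / 2 : ℝ≥0) : ℝ≥0∞) * g ≤ K * ∑ i, (w i : ℝ≥0∞) ^ 2 := by
  obtain ⟨v, hvS, hv, hvS'⟩ := exists_potential w hT
  have hlevels : ∀ t ∈ Ioc (T / 4 : ℝ) (3 * T / 4),
      g ≤ K * ∑ i, (Ioc (v i - w i : ℝ) (v i)).indicator (fun _ => (w i : ℝ≥0∞)) t := by
    intro t ht
    lift t to ℝ≥0 using (div_nonneg T.2 (by norm_num)).trans ht.1.le
    convert hg {i | t ≤ v i ∧ v i < t + w i} (isSeparator_level w hw hvS hv hvS'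
      (by exact_mod_cast ht.1) (NNReal.coe_le_coe.1 (by push_cast; linarith [ht.2]))) using 4 with i
    simp only [indicator_apply, mem_Ioc, mem_ofPred_eq, sub_lt_iff_lt_add, NNReal.coe_le_coe,
      ← NNReal.coe_add, NNReal.coe_lt_coe, and_comm]
  convert mul_le_mul_sum_sq_of_forall_mem_Ioc w (fun i => v i) hlevels using 2
  rw [← ofReal_coe_nnreal]
  congr 1
  push_cast
  ring

end DiscreteCoarea

section FineCover

variable {ι X : Type*} [MetricSpace X] {D : Set X} {r : ℝ} {c : ι → X} {A : ι → Set X}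

/-- A cover of `D` by the interiors of closed connected sets `A i` contained in balls of radius `r`
about points `c i` of `D`. Chains of such sets replace the `δ`-chains by connected sets. -/
structure IsFineCover (D : Set X) (r : ℝ) (c : ι → X) (A : ι → Set X) : Prop where
  isClosed : ∀ i, IsClosed (A i)
  isPreconnected : ∀ i, IsPreconnected (A i)
  subset_closedBall : ∀ i, A i ⊆ closedBall (c i) r
  center_mem : ∀ i, c i ∈ D
  subset_iUnion_interior : D ⊆ ⋃ i, interior (A i)

omit [MetricSpace X] in
lemma isPreconnected_biUnion_support [TopologicalSpace X] (hA : ∀ i, IsPreconnected (A i)) {i k : ι}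
    (p : (overlapGraph A).Walk i k) : IsPreconnected (⋃ m ∈ p.support, A m) := by
  induction p with
  | nil => simpa using hA _
  | @cons a b _ hab p ih =>
    have hsplit : ⋃ m ∈ (SimpleGraph.Walk.cons hab p).support, A m =
        A a ∪ ⋃ m ∈ p.support, A m := by
      simp only [SimpleGraph.Walk.support_cons, List.mem_cons, iUnion_or, iUnion_union_distrib,
        iUnion_iUnion_eq_left]
    obtain ⟨z, hza, hzb⟩ := hab.2
    rw [hsplit]
    exact (hA a).union z hza (mem_biUnion p.start_mem_support hzb) ih

omit [MetricSpace X] in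
lemma overlapGraph_reachable_of_isPreconnected [TopologicalSpace X] {C : Set X}
    (hC : IsPreconnected C) (hCA : C ⊆ ⋃ i, interior (A i)) {e f : X} (he : e ∈ C) (hf : f ∈ C)
    {i k : ι} (hi : e ∈ A i) (hk : f ∈ A k) : (overlapGraph A).Reachable i k := by
  have hlink {z : X} {m n : ι} (hm : z ∈ A m) (hn : z ∈ A n) : (overlapGraph A).Reachable m n :=
    overlapGraph_reachable_of_inter_nonempty ⟨z, hm, hn⟩
  by_contra hik
  obtain ⟨z, -, hz, hz'⟩ := hC (⋃ m ∈ {m | (overlapGraph A).Reachable i m}, interior (A m))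
    (⋃ m ∈ {m | ¬ (overlapGraph A).Reachable i m}, interior (A m))
    (isOpen_biUnion fun _ _ => isOpen_interior) (isOpen_biUnion fun _ _ => isOpen_interior)
    (fun z hz => by
      obtain ⟨m, hm⟩ := mem_iUnion.1 (hCA hz)
      by_cases him : (overlapGraph A).Reachable i m
      exacts [Or.inl (mem_biUnion him hm), Or.inr (mem_biUnion him hm)])
    (by
      obtain ⟨m, hm⟩ := mem_iUnion.1 (hCA he)
      exact ⟨e, he, mem_biUnion (hlink hi (interior_subset hm)) hm⟩)
    (by
      obtain ⟨m, hm⟩ := mem_iUnion.1 (hCA hf)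
      exact ⟨f, hf, mem_biUnion (fun him => hik (him.trans (hlink (interior_subset hm) hk))) hm⟩)
  obtain ⟨m, hm, hzm⟩ := mem_iUnion₂.1 hz
  obtain ⟨n, hn, hzn⟩ := mem_iUnion₂.1 hz'
  exact hn (hm.trans (hlink (interior_subset hzm) (interior_subset hzn)))

omit [MetricSpace X] in
lemma notMem_connectedComponentIn_of_isSeparator [TopologicalSpace X]
    (hD : D ⊆ ⋃ i, interior (A i)) {E F : Set X} {e f : X} (he : e ∈ E) (hf : f ∈ F) {V : Set ι}
    (hV : IsSeparator (overlapGraph A) {i | (A i ∩ E).Nonempty} {i | (A i ∩ F).Nonempty} V) :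
    f ∉ connectedComponentIn (D \ ⋃ i : V, A i) e := by
  intro hfe
  set C := connectedComponentIn (D \ ⋃ i : V, A i) e
  have hCA : C ⊆ ⋃ i : (Vᶜ : Set ι), interior (A i) := fun z hz => by
    obtain ⟨hzD, hzV⟩ := connectedComponentIn_subset _ _ hz
    obtain ⟨i, hi⟩ := mem_iUnion.1 (hD hzD)
    exact mem_iUnion.2
      ⟨⟨i, fun hiV => hzV (mem_iUnion.2 ⟨⟨i, hiV⟩, interior_subset hi⟩)⟩, hi⟩
  have heC : e ∈ C := mem_connectedComponentIn (connectedComponentIn_nonempty_iff.1 ⟨f, hfe⟩)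
  obtain ⟨i, hi⟩ := mem_iUnion.1 (hCA heC)
  obtain ⟨k, hk⟩ := mem_iUnion.1 (hCA hfe)
  obtain ⟨p⟩ := overlapGraph_reachable_of_isPreconnected isPreconnected_connectedComponentIn hCA
    heC hfe (interior_subset hi) (interior_subset hk)
  let toWhole : overlapGraph (fun i : (Vᶜ : Set ι) => A i) →g overlapGraph A :=
    ⟨Subtype.val, fun h => ⟨fun heq => h.1 (Subtype.ext heq), h.2⟩⟩
  obtain ⟨m, hm, hmV⟩ := hV.2.2 i ⟨e, interior_subset hi, he⟩ k ⟨f, interior_subset hk, hf⟩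
    (p.map toWhole)
  rw [SimpleGraph.Walk.support_map, List.mem_map] at hm
  obtain ⟨m, -, rfl⟩ := hm
  exact m.2 hmV

lemma clump_subset_ball (hA : ∀ i, A i ⊆ closedBall (c i) r) {R : ℝ}
    (hR : ∀ i k, (overlapGraph A).Reachable i k → dist (c i) (c k) < R)
    (C : (overlapGraph A).ConnectedComponent) : ∃ z, clump A C ⊆ Metric.ball z (R + r) := by
  induction C using SimpleGraph.ConnectedComponent.ind with | h i
  refine ⟨c i, iUnion₂_subset fun k hk z hz => ?_⟩
  have hik := hR k i (SimpleGraph.ConnectedComponent.exact hk)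
  have hzk := mem_closedBall.1 (hA k hz)
  rw [mem_ball]
  linarith [dist_triangle z (c k) (c i)]

/-- The set `E` is connected, meets the ball `B(x, k)` and, seen from there, has size at least
`ρ`. -/
def IsLargeNear (x : X) (k ρ : ℝ) (E : Set X) : Prop :=
  IsPreconnected E ∧ ∃ e₀ ∈ E ∩ ball x k, ∃ e₁ ∈ E, ρ ≤ dist e₀ e₁

lemma IsFineCover.exists_reachable_of_isSeparator [Finite ι] {L k ρ Λ : ℝ} {x : X}
    (hA : IsFineCover (ball x Λ) r c A) {W : Type*} [NormedAddCommGroup W] [NormedSpace ℝ W]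
    [ProperSpace W] (hW : 1 < Module.rank ℝ W) (hL : 1 ≤ L) (h : IsLLC X L) (hρ : 0 < ρ)
    (hΛ : L * k + ρ ≤ Λ) (hball : IsInChartBall W (ball x Λ)) (hr : r ≤ ρ / (4 * L))
    {E F : Set X} (hE : IsLargeNear x k ρ E) (hF : IsLargeNear x k ρ F) {V : Set ι}
    (hV : IsSeparator (overlapGraph A) {i | (A i ∩ E).Nonempty} {i | (A i ∩ F).Nonempty} V) :
    ∃ i k : V, (overlapGraph fun i : V => A i).Reachable i k ∧ ρ / (4 * L) ≤ dist (c i) (c k) := by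
  obtain ⟨hE, e₀, ⟨he₀, he₀x⟩, e₁, he₁, he⟩ := hE
  obtain ⟨hF, f₀, ⟨hf₀, hf₀x⟩, f₁, hf₁, hf⟩ := hF
  have hdisjoint {G : Set X} (hG : Disjoint V {i | (A i ∩ G).Nonempty}) (i : V) :
      Disjoint G (A i) :=
    (disjoint_iff_inter_eq_empty.2 (not_nonempty_iff_eq_empty.1 (disjoint_left.1 hG i.2))).symm
  by_contra! hclumps
  refine notMem_connectedComponentIn_of_isSeparator hA.subset_iUnion_interior he₀ hf₀ hV ?_
  refine h.mem_connectedComponentIn_ball_diff_iUnion hW hL hρ hΛ hball hE hF he₀ he₁ hf₀ hf₁ he hf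
    he₀x hf₀x (fun i : V => hA.isClosed i) (hdisjoint hV.1) (hdisjoint hV.2.1) fun C => ?_
  obtain ⟨z, hz⟩ := clump_subset_ball (fun i : V => hA.subset_closedBall i) hclumps C
  refine ⟨z, hz.trans (ball_subset_ball ?_)⟩
  calc ρ / (4 * L) + r ≤ ρ / (4 * L) + ρ / (4 * L) := by gcongr
    _ = ρ / (2 * L) := by field_simp; norm_num

end FineCover

section CheapWalks

variable {ι X : Type*} [MetricSpace X] [MeasurableSpace X] {μ : Measure X} {s δ r : ℝ}
  {c : ι → X} {A : ι → Set X} {w : ι → ℝ≥0}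

lemma qDelta_le_walkCost (hs : 0 < s) (hA : ∀ i, A i ⊆ closedBall (c i) r) (hδ : 2 * r ≤ δ)
    (hw : ∀ i, ballGauge μ s (c i) (4 * r) ≤ w i) {i k m : ι} (p : (overlapGraph A).Walk i k)
    (hm : m ∈ p.support) : qDelta μ s δ (c i) (c m) ≤ walkCost w p := by
  induction p with
  | nil =>
    rw [SimpleGraph.Walk.mem_support_nil_iff.1 hm, qDelta_self]
    exact zero_le
  | @cons a b _ hab p ih =>
    obtain rfl | hm := List.mem_cons.1 (SimpleGraph.Walk.support_cons hab p ▸ hm)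
    · rw [qDelta_self]
      exact zero_le
    · obtain ⟨z, hza, hzb⟩ := hab.2
      have hdist : dist (c a) (c b) ≤ 2 * r := by
        linarith [dist_triangle_left (c a) (c b) z, mem_closedBall.1 (hA a hza),
          mem_closedBall.1 (hA b hzb)]
      have hstep : qDelta μ s δ (c a) (c b) ≤ w a :=
        ((qDelta_le_rpow_measure_pairBall (hdist.trans hδ)).trans (rpow_measure_pairBall_le hs
          (by linarith [dist_self (c a), dist_nonneg (x := c a) (y := c b)])
          (by linarith [dist_comm (c a) (c b)]))).trans (hw a)
      calc qDelta μ s δ (c a) (c m) ≤ qDelta μ s δ (c a) (c b) + qDelta μ s δ (c b) (c m) :=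
            qDelta_triangle _ _ _
        _ ≤ w a + walkCost w p := add_le_add hstep (ih hm)
        _ = walkCost w (.cons hab p) := by simp [walkCost]

lemma qDelta_le_sum_of_reachable [Fintype ι] (hs : 0 < s) (hA : ∀ i, A i ⊆ closedBall (c i) r)
    (hδ : 2 * r ≤ δ) (hw : ∀ i, ballGauge μ s (c i) (4 * r) ≤ w i) {i k : ι}
    (hik : (overlapGraph A).Reachable i k) : qDelta μ s δ (c i) (c k) ≤ ∑ j, (w j : ℝ≥0∞) := by
  classical
  obtain ⟨p, hp⟩ := hik.exists_isPath
  refine (qDelta_le_walkCost hs hA hδ hw p p.end_mem_support).trans ?_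
  rw [walkCost, ← List.sum_toFinset _ hp.support_nodup]
  exact_mod_cast Finset.sum_le_sum_of_subset (Finset.subset_univ _)

/-- `E` and `F` are joined by a connected set of `q^δ`-diameter at most `a`. -/
def JoinedWithin (μ : Measure X) (s δ : ℝ) (a : ℝ≥0∞) (E F : Set X) : Prop :=
  ∃ P, IsPreconnected P ∧ (P ∩ E).Nonempty ∧ (P ∩ F).Nonempty ∧
    ∀ z ∈ P, ∀ z' ∈ P, qDelta μ s δ z z' ≤ a

lemma IsFineCover.joinedWithin_of_walk {D : Set X} (hA : IsFineCover D r c A) (hs : 0 < s)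
    (hδ : 2 * r ≤ δ) (hw : ∀ i, ballGauge μ s (c i) (4 * r) ≤ w i) {η : ℝ≥0∞}
    (hη : ∀ i, w i ≤ η) {E F : Set X} {i k : ι} (hi : (A i ∩ E).Nonempty)
    (hk : (A k ∩ F).Nonempty) (p : (overlapGraph A).Walk i k) :
    JoinedWithin μ s δ (2 * (walkCost w p + η)) E F := by
  obtain ⟨y, hy, hyE⟩ := hi
  obtain ⟨y', hy', hyF⟩ := hk
  have hreach : ∀ z ∈ ⋃ m ∈ p.support, A m, qDelta μ s δ (c i) z ≤ walkCost w p + η := by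
    intro z hz
    obtain ⟨m, hm, hzm⟩ := mem_iUnion₂.1 hz
    have hzm := mem_closedBall'.1 (hA.subset_closedBall m hzm)
    have h0 := dist_nonneg (x := c m) (y := z)
    have hstep : qDelta μ s δ (c m) z ≤ η :=
      (((qDelta_le_rpow_measure_pairBall (by linarith)).trans (rpow_measure_pairBall_le hs
        (by linarith [dist_self (c m)]) (by linarith [dist_comm (c m) z]))).trans (hw m)).trans
          (hη m)
    exact (qDelta_triangle _ _ _).trans
      (add_le_add (qDelta_le_walkCost hs hA.subset_closedBall hδ hw p hm) hstep)
  refine ⟨_, isPreconnected_biUnion_support hA.isPreconnected p,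
    ⟨y, mem_biUnion p.start_mem_support hy, hyE⟩, ⟨y', mem_biUnion p.end_mem_support hy', hyF⟩,
    fun z hz z' hz' => ?_⟩
  rw [two_mul]
  exact (qDelta_triangle z (c i) z').trans
    (add_le_add ((qDelta_comm _ _).trans_le (hreach z hz)) (hreach z' hz'))

end CheapWalks

section DoublingCovers

variable {X : Type*} [MetricSpace X] {B : Set X} {τ : ℝ}

lemma exists_finset_separated_cover (hB : TotallyBounded B) (hτ : 0 < τ) :
    ∃ N : Finset X, ↑N ⊆ B ∧ (N : Set X).Pairwise (τ < dist · ·) ∧ B ⊆ ⋃ c ∈ N, closedBall c τ := by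
  lift τ to ℝ≥0 using hτ.le
  have hτ' : τ / 2 ≠ 0 := (half_pos (NNReal.coe_pos.1 hτ)).ne'
  have hpack : packingNumber τ B ≠ ⊤ := by
    obtain ⟨N, -, hN, hcover⟩ := exists_finite_isCover_of_totallyBounded hτ' hB
    have hle := packingNumber_two_mul_le_externalCoveringNumber (τ / 2) B
    rw [mul_div_cancel₀ τ two_ne_zero] at hle
    exact ne_top_of_le_ne_top hN.encard_lt_top.ne
      (hle.trans hcover.externalCoveringNumber_le_encard)
  have hfin : (maximalSeparatedSet τ B).Finite := by
    rw [← encard_ne_top_iff, encard_maximalSeparatedSet hpack]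
    exact hpack
  refine ⟨hfin.toFinset, by simpa using maximalSeparatedSet_subset, ?_, ?_⟩
  · rw [hfin.coe_toFinset]
    intro a ha b hb hab
    have hlt : (τ : ℝ≥0∞) < edist a b := isSeparated_maximalSeparatedSet ha hb hab
    rw [edist_nndist] at hlt
    rw [dist_nndist]
    exact_mod_cast hlt
  · simpa using isCover_iff_subset_iUnion_closedBall.1 (isCover_maximalSeparatedSet hpack)

variable [MeasurableSpace X] [OpensMeasurableSpace X] {μ : Measure X} {CD : ℝ≥0}

lemma IsDoublingWith.exists_finset_cover (h : IsDoublingWith μ CD) (hB : TotallyBounded B)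
    (hτ : 0 < τ) {U : Set X} (hU : ∀ c ∈ B, Metric.ball c (τ / 2) ⊆ U) (n : ℕ) :
    ∃ N : Finset X, ↑N ⊆ B ∧ B ⊆ ⋃ c ∈ N, closedBall c τ ∧
      ∑ c ∈ N, μ (Metric.ball c (2 ^ n * τ)) ≤ (CD : ℝ≥0∞) ^ (n + 1) * μ U := by
  obtain ⟨N, hNB, hsep, hcover⟩ := exists_finset_separated_cover hB hτ
  refine ⟨N, hNB, hcover, ?_⟩
  have hdisj : (N : Set X).PairwiseDisjoint fun c => Metric.ball c (τ / 2) := fun a ha b hb hab =>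
    ball_disjoint_ball (by linarith [hsep ha hb hab])
  calc ∑ c ∈ N, μ (Metric.ball c (2 ^ n * τ))
      = ∑ c ∈ N, μ (Metric.ball c (2 ^ (n + 1) * (τ / 2))) := by simp only [pow_succ]; ring_nf
    _ ≤ ∑ c ∈ N, (CD : ℝ≥0∞) ^ (n + 1) * μ (Metric.ball c (τ / 2)) := by
        gcongr with c
        exact h.measure_ball_two_pow_mul_le _ c (by positivity)
    _ = (CD : ℝ≥0∞) ^ (n + 1) * μ (⋃ c ∈ N, Metric.ball c (τ / 2)) := by
        rw [← Finset.mul_sum, measure_biUnion_finset hdisj fun _ _ => measurableSet_ball]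
    _ ≤ (CD : ℝ≥0∞) ^ (n + 1) * μ U := by
        gcongr
        exact iUnion₂_subset fun c hc => hU c (hNB hc)

end DoublingCovers

section LoewnerProperty

variable {ι X : Type*} [MetricSpace X] {x : X} {r ρ : ℝ} {ℓ : ℕ}

lemma IsLLC.isFineCover {L τ : ℝ} (h : IsLLC X L) (hτ : 0 < τ) {D : Set X} {c : ι → X}
    (hc : ∀ i, c i ∈ D) (hD : D ⊆ ⋃ i, closedBall (c i) τ) :
    IsFineCover D (L * (2 * τ)) c
      fun i => closure (connectedComponentIn (Metric.ball (c i) (L * (2 * τ))) (c i)) where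
  isClosed _ := isClosed_closure
  isPreconnected _ := isPreconnected_connectedComponentIn.closure
  subset_closedBall _ := (closure_mono (connectedComponentIn_subset _ _)).trans
    closure_ball_subset_closedBall
  center_mem := hc
  subset_iUnion_interior z hz := by
    obtain ⟨i, hi⟩ := mem_iUnion.1 (hD hz)
    have hτ2 : τ < 2 * τ := by linarith
    refine mem_iUnion.2 ⟨i, interior_maximal (fun y hy => ?_) isOpen_ball
      (closedBall_subset_ball hτ2 hi)⟩
    exact subset_closure (h.mem_connectedComponentIn subset_rfl (mem_ball_self (by positivity)) hy)

variable [MeasurableSpace X] {μ : Measure X} {CD CW : ℝ≥0}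

lemma IsDoublingWith.exists_isFineCover [OpensMeasurableSpace X] (h : IsDoublingWith μ CD)
    (hLLC : IsLLC X (2 ^ ℓ)) {n : ℕ} (hB : TotallyBounded (Metric.ball x (2 ^ n * ρ))) (hr : 0 < r)
    (hrρ : r ≤ ρ) :
    ∃ (N : Finset X) (A : N → Set X), IsFineCover (Metric.ball x (2 ^ n * ρ)) r (↑) A ∧
      ∑ c : N, ballGauge μ 2 (c : X) (4 * r) ^ 2 ≤
        (CD : ℝ≥0∞) ^ (5 + ℓ + n) * ballGauge μ 2 x ρ ^ 2 := by
  set τ := r / 2 ^ (ℓ + 1)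
  have hτ : 0 < τ := by positivity
  have hρ : 0 < ρ := hr.trans_le hrρ
  have hτρ : τ ≤ 2 ^ n * ρ := ((div_le_self hr.le (one_le_pow₀ one_le_two)).trans hrρ).trans
    (le_mul_of_one_le_left hρ.le (one_le_pow₀ one_le_two))
  have hr_eq : (2 : ℝ) ^ ℓ * (2 * τ) = r := by simp only [τ, pow_succ]; field_simp
  obtain ⟨N, hNB, hcover, hsum⟩ := h.exists_finset_cover hB hτ
    (U := Metric.ball x (2 ^ (n + 1) * ρ))
    (fun c hc => ball_subset_ball' (by rw [pow_succ]; linarith [mem_ball.1 hc])) (3 + ℓ)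
  refine ⟨N, _, hr_eq ▸ hLLC.isFineCover hτ (fun c : N => hNB c.2)
    (by rwa [iUnion_subtype]), ?_⟩
  have h4r : (2 : ℝ) ^ (3 + ℓ) * τ = 4 * r := by rw [← hr_eq, pow_add]; ring
  rw [h4r] at hsum
  simp only [sq_ballGauge_two]
  calc ∑ c : N, μ (Metric.ball (c : X) (4 * r))
      = ∑ c ∈ N, μ (Metric.ball c (4 * r)) :=
        Finset.sum_coe_sort N fun c => μ (Metric.ball c (4 * r))
    _ ≤ (CD : ℝ≥0∞) ^ (3 + ℓ + 1) * ((CD : ℝ≥0∞) ^ (n + 1) * μ (Metric.ball x ρ)) :=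
        hsum.trans (by gcongr; exact h.measure_ball_two_pow_mul_le _ x hρ)
    _ = (CD : ℝ≥0∞) ^ (5 + ℓ + n) * μ (Metric.ball x ρ) := by ring

lemma IsDoublingWith.ballGauge_two_le_of_mem_ball (h : IsDoublingWith μ CD) (hρ : 0 < ρ) {z : X}
    (hz : z ∈ Metric.ball x (2 ^ (4 + 2 * ℓ) * ρ)) :
    ballGauge μ 2 x ρ ≤ (CD : ℝ≥0∞) ^ (5 + 2 * ℓ) * ballGauge μ 2 z (ρ / (4 * 2 ^ ℓ) / 2) := by
  refine (ballGauge_mono two_pos ?_).trans (h.ballGauge_two_four_pow_mul_le _ z (by positivity))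
  have hL : (1 : ℝ) ≤ 2 ^ ℓ := one_le_pow₀ one_le_two
  have hpow : (4 : ℝ) ^ (5 + 2 * ℓ) = 1024 * (2 ^ ℓ) ^ 4 := by
    rw [pow_add, ← pow_mul, show (4 : ℝ) = 2 ^ 2 by norm_num, ← pow_mul, ← pow_mul]
    ring_nf
  rw [mem_ball', pow_add, pow_mul' 2 2 ℓ] at hz
  rw [hpow]
  generalize (2 : ℝ) ^ ℓ = L at *
  calc ρ + dist x z ≤ (1 + 16 * L ^ 2) * ρ := by linarith
    _ ≤ (L ^ 3 + 16 * L ^ 3) * ρ := by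
        gcongr
        exacts [one_le_pow₀ hL, by norm_num]
    _ ≤ 1024 * L ^ 4 * (ρ / (4 * L) / 2) := by
        field_simp
        norm_num

lemma IsFineCover.ballGauge_two_le_of_isSeparator [Fintype ι] {c : ι → X} {A : ι → Set X}
    (hA : IsFineCover (Metric.ball x (2 ^ (4 + 2 * ℓ) * ρ)) r c A) (h : IsDoublingWith μ CD)
    (hLLC : IsLLC X (2 ^ ℓ)) {W : Type*} [NormedAddCommGroup W] [NormedSpace ℝ W] [ProperSpace W]
    (hW : 1 < Module.rank ℝ W) (hball : IsInChartBall W (Metric.ball x (2 ^ (4 + 2 * ℓ) * ρ)))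
    (hρ : 0 < ρ) (hr : r ≤ ρ / (4 * 2 ^ ℓ)) {δ : ℝ} (hδ : 2 * r ≤ δ)
    (hq : ∀ p ∈ Metric.ball x (2 ^ (4 + 2 * ℓ) * ρ), ∀ p' ∈ Metric.ball x (2 ^ (4 + 2 * ℓ) * ρ),
      ρ / (4 * 2 ^ ℓ) ≤ dist p p' →
        ballGauge μ 2 p (ρ / (4 * 2 ^ ℓ) / 2) ≤ 2 * CW * qDelta μ 2 δ p p')
    {w : ι → ℝ≥0} (hw : ∀ i, ballGauge μ 2 (c i) (4 * r) ≤ w i) {E F : Set X}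
    (hE : IsLargeNear x (2 ^ (3 + ℓ) * ρ) ρ E) (hF : IsLargeNear x (2 ^ (3 + ℓ) * ρ) ρ F)
    {V : Set ι}
    (hV : IsSeparator (overlapGraph A) {i | (A i ∩ E).Nonempty} {i | (A i ∩ F).Nonempty} V) :
    ballGauge μ 2 x ρ ≤
      CD ^ (5 + 2 * ℓ) * (2 * CW) * ∑ i, V.indicator (fun i => (w i : ℝ≥0∞)) i := by
  classical
  have hL : (1 : ℝ) ≤ 2 ^ ℓ := one_le_pow₀ one_le_two
  have hΛ : 2 ^ ℓ * (2 ^ (3 + ℓ) * ρ) + ρ ≤ 2 ^ (4 + 2 * ℓ) * ρ := by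
    rw [pow_add, pow_add, pow_mul' 2 2 ℓ]
    generalize (2 : ℝ) ^ ℓ = L at *
    nlinarith [one_le_pow₀ (n := 2) hL]
  obtain ⟨i, k, hik, hdist⟩ :=
    hA.exists_reachable_of_isSeparator hW hL hLLC hρ hΛ hball hr hE hF hV
  have hsum : ∑ j : V, (w j : ℝ≥0∞) = ∑ i, V.indicator (fun i => (w i : ℝ≥0∞)) i := by
    simpa only [tsum_fintype] using tsum_subtype V fun i => (w i : ℝ≥0∞)
  calc ballGauge μ 2 x ρ
      ≤ CD ^ (5 + 2 * ℓ) * ballGauge μ 2 (c i) (ρ / (4 * 2 ^ ℓ) / 2) :=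
        h.ballGauge_two_le_of_mem_ball hρ (hA.center_mem i)
    _ ≤ CD ^ (5 + 2 * ℓ) * (2 * CW * qDelta μ 2 δ (c i) (c k)) := by
        gcongr
        exact hq _ (hA.center_mem i) _ (hA.center_mem k) hdist
    _ ≤ CD ^ (5 + 2 * ℓ) * (2 * CW * ∑ j : V, (w j : ℝ≥0∞)) := by
        gcongr
        exact qDelta_le_sum_of_reachable two_pos (fun j : V => hA.subset_closedBall j) hδ
          (fun j => hw j) hik
    _ = _ := by rw [hsum, mul_assoc (_ ^ _)]

lemma IsFineCover.joinedWithin_of_sum_sq_lt [Fintype ι] {D : Set X} {c : ι → X} {A : ι → Set X}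
    (hA : IsFineCover D r c A) {s δ : ℝ} (hs : 0 < s) (hδ : 2 * r ≤ δ) {w : ι → ℝ≥0}
    (hw : ∀ i, ballGauge μ s (c i) (4 * r) ≤ w i) {T : ℝ≥0} (hT : ∀ i, w i ≤ T / 4)
    {E F : Set X} {g K : ℝ≥0∞}
    (hg : ∀ V, IsSeparator (overlapGraph A) {i | (A i ∩ E).Nonempty} {i | (A i ∩ F).Nonempty} V →
      g ≤ K * ∑ i, V.indicator (fun i => (w i : ℝ≥0∞)) i)
    (hlt : K * ∑ i, (w i : ℝ≥0∞) ^ 2 < (T / 2 : ℝ≥0) * g) : JoinedWithin μ s δ (3 * T) E F := by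
  by_contra hjoin
  refine hlt.not_ge (half_mul_le_mul_sum_sq_of_forall_isSeparator w hT
    (fun i hi k hk p => ?_) hg)
  by_contra! hp
  obtain ⟨P, hP, hPE, hPF, hdiam⟩ := hA.joinedWithin_of_walk hs hδ hw
    (η := (T / 4 : ℝ≥0)) (fun i => by exact_mod_cast hT i) hi hk p
  refine hjoin ⟨P, hP, hPE, hPF, fun z hz z' hz' => (hdiam z hz z' hz').trans ?_⟩
  norm_cast
  calc 2 * (walkCost w p + T / 4) ≤ 2 * (T + T / 4) := by gcongr
    _ ≤ 2 * (T + T / 4) + T / 2 := le_self_add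
    _ = 3 * T := by ring

/-- The constant in the Loewner property of `q^δ`: large connected sets near a ball `B(x, ρ)` are
joined within `loewnerConst * μ(B(x, ρ))^{1/2}`. -/
def loewnerConst (CD CW : ℝ≥0) (ℓ : ℕ) : ℝ≥0∞ := 24 * CW * CD ^ (14 + 5 * ℓ)

lemma JoinedWithin.mono {s δ δ' : ℝ} {a : ℝ≥0∞} {E F : Set X} (h : JoinedWithin μ s δ a E F)
    (hδ : δ ≤ δ') : JoinedWithin μ s δ' a E F := by
  obtain ⟨P, hP, hPE, hPF, hdiam⟩ := h
  exact ⟨P, hP, hPE, hPF, fun z hz z' hz' => (qDelta_anti hδ z z').trans (hdiam z hz z' hz')⟩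

lemma IsWMDM.ne_zero [Nontrivial X] {s : ℝ} (hw : IsWMDM μ s CW) (h : IsDoublingWith μ CD)
    (hs : 0 < s) : CW ≠ 0 := by
  rintro rfl
  obtain ⟨x, y, hxy⟩ := exists_pair_ne X
  have hpos := (h.ballGauge_pos x (dist_pos.2 hxy)).trans_le
    ((ballGauge_le_rpow_measure_pairBall hs (by simp)).trans (hw x y))
  simp at hpos

lemma IsDoublingWith.joinedWithin_of_ballGauge_le_qDelta [OpensMeasurableSpace X]
    (h : IsDoublingWith μ CD) (hLLC : IsLLC X (2 ^ ℓ))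
    (hsmall : ∀ η : ℝ≥0∞, 0 < η → ∃ ε > 0, ∀ z : X, ballGauge μ 2 z ε ≤ η)
    {W : Type*} [NormedAddCommGroup W] [NormedSpace ℝ W] [ProperSpace W]
    (hW : 1 < Module.rank ℝ W) (hball : IsInChartBall W (Metric.ball x (2 ^ (4 + 2 * ℓ) * ρ)))
    (hB : TotallyBounded (Metric.ball x (2 ^ (4 + 2 * ℓ) * ρ))) (hCW : CW ≠ 0)
    (hρ : 0 < ρ) {δ : ℝ} (hδ : 0 < δ)
    (hq : ∀ p ∈ Metric.ball x (2 ^ (4 + 2 * ℓ) * ρ), ∀ p' ∈ Metric.ball x (2 ^ (4 + 2 * ℓ) * ρ),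
      ρ / (4 * 2 ^ ℓ) ≤ dist p p' →
        ballGauge μ 2 p (ρ / (4 * 2 ^ ℓ) / 2) ≤ 2 * CW * qDelta μ 2 δ p p')
    {E F : Set X} (hE : IsLargeNear x (2 ^ (3 + ℓ) * ρ) ρ E)
    (hF : IsLargeNear x (2 ^ (3 + ℓ) * ρ) ρ F) :
    JoinedWithin μ 2 δ (loewnerConst CD CW ℓ * ballGauge μ 2 x ρ) E F := by
  have : Nonempty X := ⟨x⟩
  obtain ⟨g, hg_eq⟩ : ∃ g : ℝ≥0, (g : ℝ≥0∞) = ballGauge μ 2 x ρ :=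
    ⟨_, ENNReal.coe_toNNReal (h.ballGauge_ne_top two_pos x hρ)⟩
  have hg : 0 < g := by rw [← ENNReal.coe_pos, hg_eq]; exact h.ballGauge_pos x hρ
  have hCD : 0 < CD := by exact_mod_cast one_pos.trans_le h.one_le
  set T : ℝ≥0 := 8 * CW * CD ^ (14 + 5 * ℓ) * g
  have hT : loewnerConst CD CW ℓ * ballGauge μ 2 x ρ = 3 * T := by
    simp only [loewnerConst, T, ← hg_eq]
    push_cast
    ring
  obtain ⟨ε, hε, hgauge⟩ := hsmall ↑(T / 4) (ENNReal.coe_pos.2 (by positivity))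
  obtain ⟨r, hr, hr4⟩ : ∃ r > 0, 4 * r ≤ min δ (min ε (ρ / (4 * 2 ^ ℓ))) :=
    ⟨_, by positivity, (mul_div_cancel₀ _ four_ne_zero).le⟩
  obtain ⟨hrδ, hrε, hrρ⟩ : 4 * r ≤ δ ∧ 4 * r ≤ ε ∧ 4 * r ≤ ρ / (4 * 2 ^ ℓ) := by
    simpa only [le_min_iff] using hr4
  have hρL : ρ / (4 * 2 ^ ℓ) ≤ ρ := div_le_self hρ.le
    (one_le_mul_of_one_le_of_one_le (by norm_num) (one_le_pow₀ one_le_two))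
  obtain ⟨N, A, hA, henergy⟩ := h.exists_isFineCover hLLC hB hr (by linarith)
  have hw (c : N) : (ballGauge μ 2 (c : X) (4 * r)).toNNReal = ballGauge μ 2 (c : X) (4 * r) :=
    ENNReal.coe_toNNReal (h.ballGauge_ne_top two_pos c (by positivity))
  have hwT (c : N) : (ballGauge μ 2 (c : X) (4 * r)).toNNReal ≤ T / 4 := by
    rw [← ENNReal.coe_le_coe, hw]
    exact (ballGauge_mono two_pos (by simpa)).trans (hgauge c)
  have hδr : 2 * r ≤ δ := by linarith
  rw [hT]
  refine hA.joinedWithin_of_sum_sq_lt two_pos hδr (fun c => (hw c).ge) hwT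
    (fun V hV => hA.ballGauge_two_le_of_isSeparator h hLLC hW hball hρ (by linarith) hδr
      hq (fun c => (hw c).ge) hE hF hV) ?_
  simp only [hw]
  refine (mul_le_mul_right henergy _).trans_lt ?_
  rw [← hg_eq]
  norm_cast
  calc CD ^ (5 + 2 * ℓ) * (2 * CW) * (CD ^ (5 + ℓ + (4 + 2 * ℓ)) * g ^ 2)
      = 2 * (CW * CD ^ (14 + 5 * ℓ) * g ^ 2) := by ring
    _ < 4 * (CW * CD ^ (14 + 5 * ℓ) * g ^ 2) := by gcongr; norm_num
    _ = T / 2 * g := by simp only [T]; ring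

/-- The Loewner property of `q^δ` at scale `ρ` around `x`: any two connected sets of size at
least `ρ` that meet `B(x, k)` are joined within `a`. -/
def LoewnerAt (μ : Measure X) (s δ : ℝ) (x : X) (k ρ : ℝ) (a : ℝ≥0∞) : Prop :=
  ∀ E F : Set X, IsLargeNear x k ρ E → IsLargeNear x k ρ F → JoinedWithin μ s δ a E F

lemma IsWMDM.loewnerAt [OpensMeasurableSpace X] (hw : IsWMDM μ 2 CW) (h : IsDoublingWith μ CD)
    (hLLC : IsLLC X (2 ^ ℓ))
    (hsmall : ∀ η : ℝ≥0∞, 0 < η → ∃ ε > 0, ∀ z : X, ballGauge μ 2 z ε ≤ η)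
    {W : Type*} [NormedAddCommGroup W] [NormedSpace ℝ W] [ProperSpace W]
    (hW : 1 < Module.rank ℝ W) (hball : IsInChartBall W (closedBall x (2 ^ (4 + 2 * ℓ) * ρ)))
    (hρ : 0 < ρ) {δ : ℝ} (hδ : 0 < δ) :
    LoewnerAt μ 2 δ x (2 ^ (3 + ℓ) * ρ) ρ (loewnerConst CD CW ℓ * ballGauge μ 2 x ρ) := by
  intro E F hE hF
  obtain ⟨j, hj, hball⟩ := hball
  have hcpt : IsCompact (closedBall x (2 ^ (4 + 2 * ℓ) * ρ)) :=
    ((isCompact_closedBall 0 1).image hj.continuous).of_isClosed_subset isClosed_closedBall hball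
  obtain ⟨e₀, -, e₁, -, he⟩ := hE.2
  have : Nontrivial X := ⟨e₀, e₁, dist_pos.1 (hρ.trans_le he)⟩
  obtain ⟨δ₀, hδ₀, hq⟩ := hw.exists_forall_ballGauge_le_qDelta h two_pos hsmall hcpt
    (ρ := ρ / (4 * 2 ^ ℓ)) (by positivity)
  have hsub := ball_subset_closedBall (x := x) (ε := 2 ^ (4 + 2 * ℓ) * ρ)
  refine (h.joinedWithin_of_ballGauge_le_qDelta hLLC hsmall hW ⟨j, hj, hsub.trans hball⟩
    (hcpt.totallyBounded.subset hsub) (hw.ne_zero h two_pos) hρ (lt_min hδ hδ₀)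
    (fun p hp p' hp' hpp' => (hq p (hsub hp) p' (hsub hp') hpp').trans ?_)
    hE hF).mono (min_le_left δ δ₀)
  gcongr
  exact qDelta_anti (min_le_right δ δ₀) p p'

end LoewnerProperty

section ContinuaGrowth

variable {X : Type*} [MetricSpace X] [MeasurableSpace X] {μ : Measure X} {CD CW : ℝ≥0} {s δ : ℝ}
  {x y : X} {ρ k : ℝ} {a b : ℝ≥0∞}

/-- Some connected set joins `x` to distance `ρ` while staying within `q^δ`-distance `a` of `x`. -/
def HasReach (μ : Measure X) (s δ : ℝ) (x : X) (ρ : ℝ) (a : ℝ≥0∞) : Prop :=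
  ∃ E : Set X, IsPreconnected E ∧ x ∈ E ∧ (∃ b ∈ E, ρ ≤ dist x b) ∧ ∀ z ∈ E, qDelta μ s δ x z ≤ a

lemma HasReach.mono {a' : ℝ≥0∞} (h : HasReach μ s δ x ρ a) (ha : a ≤ a') :
    HasReach μ s δ x ρ a' := by
  obtain ⟨E, hE, hxE, hreach, hq⟩ := h
  exact ⟨E, hE, hxE, hreach, fun z hz => (hq z hz).trans ha⟩

lemma HasReach.qDelta_le (hx : HasReach μ s δ x ρ a) (hy : HasReach μ s δ y ρ a)
    (hL : LoewnerAt μ s δ x k ρ b) (hk : dist x y < k) : qDelta μ s δ x y ≤ 2 * a + b := by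
  obtain ⟨E, hE, hxE, ⟨e, heE, he⟩, hqx⟩ := hx
  obtain ⟨F, hF, hyF, ⟨f, hfF, hf⟩, hqy⟩ := hy
  obtain ⟨P, -, ⟨p, hpP, hpE⟩, ⟨p', hp'P, hp'F⟩, hqP⟩ := hL E F
    ⟨hE, x, ⟨hxE, mem_ball_self (dist_nonneg.trans_lt hk)⟩, e, heE, he⟩
    ⟨hF, y, ⟨hyF, mem_ball'.2 hk⟩, f, hfF, hf⟩
  calc qDelta μ s δ x y
      ≤ qDelta μ s δ x p + (qDelta μ s δ p p' + qDelta μ s δ p' y) :=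
        (qDelta_triangle _ _ _).trans (by gcongr; exact qDelta_triangle _ _ _)
    _ ≤ a + (b + a) := by
        rw [qDelta_comm p' y]
        gcongr
        exacts [hqx p hpE, hqP p hpP p' hp'P, hqy p' hp'F]
    _ = 2 * a + b := by ring

section Preconnected

variable [PreconnectedSpace X] {L : ℝ} {ℓ : ℕ} {K : ℝ≥0∞}

omit [MeasurableSpace X] in
lemma IsLLC.exists_isPreconnected_subset_ball (h : IsLLC X L) (hρ : 0 < ρ) (hy : ρ ≤ dist x y) :
    ∃ E ⊆ Metric.ball x (2 * L * ρ), IsPreconnected E ∧ x ∈ E ∧ ∃ b ∈ E, ρ ≤ dist x b := by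
  obtain ⟨z, hz⟩ := exists_dist_eq_of_le_dist hρ.le hy
  obtain ⟨E, hE, hsub, hx, hzE⟩ := (h x (2 * ρ) (by positivity)).1 x
    (mem_ball_self (by positivity)) z (by rw [mem_ball']; linarith)
  exact ⟨E, by rwa [mul_comm 2 L, mul_assoc], hE.2.isPreconnected, hx, z, hzE, hz.ge⟩

lemma IsLLC.hasReach (h : IsLLC X L) (hs : 0 < s) (hρ : 0 < ρ) (hy : ρ ≤ dist x y)
    (hδ : 2 * L * ρ ≤ δ) : HasReach μ s δ x ρ (ballGauge μ s x (4 * L * ρ)) := by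
  obtain ⟨E, hsub, hE, hxE, hreach⟩ := h.exists_isPreconnected_subset_ball hρ hy
  refine ⟨E, hE, hxE, hreach, fun z hz => ?_⟩
  have hxz := mem_ball'.1 (hsub hz)
  refine (qDelta_le_rpow_measure_pairBall (hxz.le.trans hδ)).trans
    (rpow_measure_pairBall_le hs ?_ ?_)
  · rw [dist_self]; linarith [dist_nonneg (x := x) (y := z)]
  · rw [dist_comm z]; linarith

/-- Join a set `E` reaching `ρ` to a connected set near a point at distance `(2L + 4)ρ` from `x`;
the union of `E` with the connection reaches `4ρ`. -/
lemma HasReach.four_mul (hx : HasReach μ s δ x ρ a) (hL : LoewnerAt μ s δ x k ρ b)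
    (hLLC : IsLLC X L) (hL1 : 0 ≤ L) (hρ : 0 < ρ) (hy : (2 * L + 4) * ρ ≤ dist x y)
    (hk : (2 * L + 4) * ρ < k) : HasReach μ s δ x (4 * ρ) (a + b) := by
  obtain ⟨E, hE, hxE, ⟨e, heE, he⟩, hq⟩ := hx
  obtain ⟨z, hz⟩ := exists_dist_eq_of_le_dist (by positivity) hy
  have hLρ : 0 ≤ L * ρ := by positivity
  obtain ⟨F, hsub, hF, hzF, f, hfF, hf⟩ := hLLC.exists_isPreconnected_subset_ball hρ
    (x := z) (y := x) (by rw [dist_comm, hz]; linarith)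
  obtain ⟨P, hP, ⟨p, hpP, hpE⟩, ⟨p', hp'P, hp'F⟩, hqP⟩ := hL E F
    ⟨hE, x, ⟨hxE, mem_ball_self (by linarith)⟩, e, heE, he⟩
    ⟨hF, z, ⟨hzF, by rwa [mem_ball', hz]⟩, f, hfF, hf⟩
  refine ⟨E ∪ P, hE.union p hpE hpP hP, Or.inl hxE, ⟨p', Or.inr hp'P, ?_⟩, ?_⟩
  · linarith [mem_ball.1 (hsub hp'F), dist_triangle x p' z]
  · rintro w (hw | hw)
    · exact (hq w hw).trans le_self_add
    · exact (qDelta_triangle x p w).trans (add_le_add (hq p hpE) (hqP p hpP w hw))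

variable [BorelSpace X]

/-- By reverse doubling the connection costs of all scales add up to a multiple of the last. -/
lemma IsDoublingWith.hasReach_four_pow_mul (h : IsDoublingWith μ CD) (hLLC : IsLLC X (2 ^ ℓ))
    (hρ : 0 < ρ) (hδ : 2 * 2 ^ ℓ * ρ ≤ δ) (n : ℕ) (hy : 2 ^ (3 + ℓ) * (4 ^ n * ρ) ≤ dist x y)
    (hL : ∀ σ, 0 < σ → σ ≤ 4 ^ n * ρ →
      LoewnerAt μ 2 δ x (2 ^ (3 + ℓ) * σ) σ (K * ballGauge μ 2 x σ)) :
    HasReach μ 2 δ x (4 ^ n * ρ)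
      (ballGauge μ 2 x (4 * 2 ^ ℓ * ρ) + 4 * CD ^ 2 * K * ballGauge μ 2 x (4 ^ n * ρ)) := by
  have hL1 : (1 : ℝ) ≤ 2 ^ ℓ := one_le_pow₀ one_le_two
  rw [pow_add] at hy
  induction n with
  | zero =>
    rw [pow_zero, one_mul] at *
    exact (hLLC.hasReach two_pos hρ (y := y) (by nlinarith) hδ).mono le_self_add
  | succ n ih =>
    set σ := 4 ^ n * ρ
    have hσ : 0 < σ := by positivity
    have hσ4 : 4 ^ (n + 1) * ρ = 4 * σ := by simp only [σ, pow_succ]; ring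
    rw [hσ4] at hy hL ⊢
    have hyσ : (2 * 2 ^ ℓ + 4) * σ ≤ dist x y := by nlinarith
    have hkσ : (2 * 2 ^ ℓ + 4) * σ < 2 ^ (3 + ℓ) * σ := by rw [pow_add]; gcongr; linarith
    refine ((ih (by nlinarith) fun τ hτ hτσ => hL τ hτ (by linarith)).four_mul
      (hL σ hσ (by linarith)) hLLC (by positivity) hσ hyσ hkσ).mono ?_
    rw [add_assoc]
    gcongr
    calc 4 * CD ^ 2 * K * ballGauge μ 2 x σ + K * ballGauge μ 2 x σ
        = K * ((4 * CD ^ 2 + 1) * ballGauge μ 2 x σ) := by ring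
      _ ≤ K * (4 * CD ^ 2 * ballGauge μ 2 x (4 * σ)) :=
          mul_le_mul_right (h.reverse_ballGauge_two hσ (y := y) (by nlinarith)) K
      _ = 4 * CD ^ 2 * K * ballGauge μ 2 x (4 * σ) := by ring

lemma IsDoublingWith.hasReach (h : IsDoublingWith μ CD) (hLLC : IsLLC X (2 ^ ℓ))
    (hsmall : ∀ η : ℝ≥0∞, 0 < η → ∃ ε > 0, ∀ z : X, ballGauge μ 2 z ε ≤ η) (hρ : 0 < ρ)
    (hδ : 0 < δ) (hy : 2 ^ (3 + ℓ) * ρ ≤ dist x y)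
    (hL : ∀ σ, 0 < σ → σ ≤ ρ → LoewnerAt μ 2 δ x (2 ^ (3 + ℓ) * σ) σ (K * ballGauge μ 2 x σ))
    {η : ℝ≥0∞} (hη : 0 < η) :
    HasReach μ 2 δ x ρ (η + 4 * CD ^ 2 * K * ballGauge μ 2 x ρ) := by
  obtain ⟨ε, hε, hgauge⟩ := hsmall η hη
  have hlim : Tendsto (fun n : ℕ => 4 * 2 ^ ℓ * ρ * (1 / 4 : ℝ) ^ n) atTop (𝓝 0) := by
    simpa only [mul_zero] using (tendsto_pow_atTop_nhds_zero_of_lt_one (r := (1 / 4 : ℝ))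
      (by norm_num) (by norm_num)).const_mul (4 * 2 ^ ℓ * ρ)
  obtain ⟨n, hn⟩ := (hlim.eventually (ge_mem_nhds (lt_min hε hδ))).exists
  obtain ⟨σ, rfl⟩ : ∃ σ, ρ = 4 ^ n * σ := ⟨_, (mul_div_cancel₀ ρ (by positivity)).symm⟩
  have hσ : 0 < σ := pos_of_mul_pos_right hρ (by positivity)
  have hscale : 4 * 2 ^ ℓ * (4 ^ n * σ) * (1 / 4 : ℝ) ^ n = 4 * 2 ^ ℓ * σ := by
    rw [one_div, inv_pow]
    field_simp
  obtain ⟨hnε, hnδ⟩ : 4 * 2 ^ ℓ * σ ≤ ε ∧ 4 * 2 ^ ℓ * σ ≤ δ := by rwa [hscale, le_min_iff] at hn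
  have hL0 : 0 < 2 ^ ℓ * σ := by positivity
  refine (h.hasReach_four_pow_mul hLLC hσ (by linarith) n hy hL).mono ?_
  gcongr
  exact (ballGauge_mono two_pos (by simpa)).trans (hgauge x)

lemma IsWMDM.hasReach (hw : IsWMDM μ 2 CW) (h : IsDoublingWith μ CD) (hLLC : IsLLC X (2 ^ ℓ))
    (hsmall : ∀ η : ℝ≥0∞, 0 < η → ∃ ε > 0, ∀ z : X, ballGauge μ 2 z ε ≤ η)
    {W : Type*} [NormedAddCommGroup W] [NormedSpace ℝ W] [ProperSpace W]
    (hW : 1 < Module.rank ℝ W) (hball : IsInChartBall W (closedBall x (2 ^ (4 + 2 * ℓ) * ρ)))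
    (hρ : 0 < ρ) (hδ : 0 < δ) (hy : 2 ^ (3 + ℓ) * ρ ≤ dist x y) {η : ℝ≥0∞} (hη : 0 < η) :
    HasReach μ 2 δ x ρ (η + 4 * CD ^ 2 * loewnerConst CD CW ℓ * ballGauge μ 2 x ρ) := by
  obtain ⟨j, hj, hsub⟩ := hball
  refine h.hasReach hLLC hsmall hρ hδ hy (fun σ hσ hσρ => ?_) hη
  have hσball : closedBall x (2 ^ (4 + 2 * ℓ) * σ) ⊆ closedBall x (2 ^ (4 + 2 * ℓ) * ρ) :=
    closedBall_subset_closedBall (by gcongr)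
  exact hw.loewnerAt h hLLC hsmall hW ⟨j, hj, hσball.trans hsub⟩ hσ hδ

lemma IsWMDM.qmu_le_of_isInChartBall (hw : IsWMDM μ 2 CW) (h : IsDoublingWith μ CD)
    (hLLC : IsLLC X (2 ^ ℓ))
    (hsmall : ∀ η : ℝ≥0∞, 0 < η → ∃ ε > 0, ∀ z : X, ballGauge μ 2 z ε ≤ η)
    {W : Type*} [NormedAddCommGroup W] [NormedSpace ℝ W] [ProperSpace W]
    (hW : 1 < Module.rank ℝ W) (hρ : 0 < ρ) (hxy : dist x y = 4 * ρ)
    (hball : ∀ z ∈ ({x, y} : Set X), IsInChartBall W (closedBall z (2 ^ (4 + 2 * ℓ) * ρ)))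
    (hfar : ∀ z ∈ ({x, y} : Set X), ∃ z', 2 ^ (3 + ℓ) * ρ ≤ dist z z') :
    qmu μ 2 x y ≤ 9 * loewnerConst CD CW ℓ * CD ^ 3 * ballGauge μ 2 x (dist x y) := by
  have : Nonempty X := ⟨x⟩
  have hdist : 0 < dist x y := by linarith
  refine qmu_le fun δ hδ => ENNReal.le_of_forall_pos_le_add fun η hη _ => ?_
  set K := loewnerConst CD CW ℓ
  set g := ballGauge μ 2 x (dist x y)
  have hgauge (z) (hz : z ∈ ({x, y} : Set X)) : ballGauge μ 2 z ρ ≤ CD * g := by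
    have hzx : dist z x ≤ dist x y := by rcases hz with rfl | rfl <;> simp [dist_comm]
    refine (ballGauge_mono two_pos (y := x) (t := 4 ^ 1 * dist x y) (by linarith)).trans ?_
    simpa only [pow_one] using h.ballGauge_two_four_pow_mul_le 1 x hdist
  have hreach (z) (hz : z ∈ ({x, y} : Set X)) :
      HasReach μ 2 δ z ρ ((η / 2 : ℝ≥0) + 4 * CD ^ 2 * K * (CD * g)) := by
    obtain ⟨z', hz'⟩ := hfar z hz
    refine (hw.hasReach h hLLC hsmall hW (hball z hz) hρ hδ hz' (η := (η / 2 : ℝ≥0))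
      (by positivity)).mono ?_
    gcongr
    exact hgauge z hz
  have hk : dist x y < 2 ^ (3 + ℓ) * ρ := by
    rw [hxy, pow_add]
    gcongr
    linarith [one_le_pow₀ (one_le_two (α := ℝ)) (n := ℓ)]
  calc qDelta μ 2 δ x y
      ≤ 2 * ((η / 2 : ℝ≥0) + 4 * CD ^ 2 * K * (CD * g)) + K * ballGauge μ 2 x ρ :=
        (hreach x (by simp)).qDelta_le (hreach y (by simp))
          (hw.loewnerAt h hLLC hsmall hW (hball x (by simp)) hρ hδ) hk
    _ ≤ 2 * ((η / 2 : ℝ≥0) + 4 * CD ^ 2 * K * (CD * g)) + K * (CD ^ 3 * g) := by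
        gcongr
        exact (hgauge x (by simp)).trans (by gcongr; exact le_self_pow₀ h.one_le three_ne_zero)
    _ = 9 * K * CD ^ 3 * g + 2 * (η / 2 : ℝ≥0) := by ring
    _ = 9 * K * CD ^ 3 * g + η := by congr 1; exact_mod_cast mul_div_cancel₀ η two_ne_zero

lemma IsWMDM.exists_forall_qmu_le [Nontrivial X] (hw : IsWMDM μ 2 CW) (h : IsDoublingWith μ CD)
    (hLLC : IsLLC X (2 ^ ℓ))
    (hsmall : ∀ η : ℝ≥0∞, 0 < η → ∃ ε > 0, ∀ z : X, ballGauge μ 2 z ε ≤ η)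
    (W : Type*) [NormedAddCommGroup W] [NormedSpace ℝ W] [ProperSpace W] [ChartedSpace W X]
    (hW : 1 < Module.rank ℝ W) (x : X) :
    ∃ r > 0, ∀ y, dist x y < r →
      qmu μ 2 x y ≤ 9 * loewnerConst CD CW ℓ * CD ^ 3 * ballGauge μ 2 x (dist x y) := by
  obtain ⟨R, hR, j, hj, hsub⟩ := exists_closedBall_isInChartBall (E := W) x
  obtain ⟨R', hR', hfar⟩ := exists_pos_forall_exists_le_dist X
  set C : ℝ := 2 ^ (4 + 2 * ℓ)
  refine ⟨min (R / (4 + C)) (R' / 2 ^ (3 + ℓ)), by positivity, fun y hy => ?_⟩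
  rcases eq_or_ne x y with rfl | hxy
  · refine (qmu_le fun δ _ => ?_).trans zero_le
    rw [qDelta_self]
  obtain ⟨ρ, hρ_eq⟩ : ∃ ρ, dist x y = 4 * ρ := ⟨_, (mul_div_cancel₀ _ four_ne_zero).symm⟩
  have hρ : 0 < ρ := by linarith [dist_pos.2 hxy]
  obtain ⟨hyR, hyR'⟩ := lt_min_iff.1 hy
  rw [lt_div_iff₀' (by positivity), hρ_eq] at hyR hyR'
  have hCρ : 0 < C * ρ := by positivity
  have hpow : 0 < 2 ^ (3 + ℓ) * ρ := by positivity
  refine hw.qmu_le_of_isInChartBall h hLLC hsmall hW hρ hρ_eq (fun z hz => ⟨j, hj, ?_⟩)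
    fun z _ => ?_
  · have hzx : dist z x ≤ 4 * ρ := by rcases hz with rfl | rfl <;> simp [dist_comm, ← hρ_eq]
    exact (closedBall_subset_closedBall' (by linarith)).trans hsub
  · obtain ⟨z', hz'⟩ := hfar z
    exact ⟨z', by linarith⟩

end Preconnected

end ContinuaGrowth

section HausdorffMeasure

variable {X : Type*} [MetricSpace X]

lemma exists_forall_dist_le_mul_dist {x : X} {S : Set X} (hS : Bornology.IsBounded S) {y₀ : X}
    (hy₀ : y₀ ∈ S) (hne : x ≠ y₀) {c : ℝ} (hc : 1 < c) :
    ∃ y ∈ S, x ≠ y ∧ ∀ z ∈ S, dist x z ≤ c * dist x y := by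
  obtain ⟨C, hC⟩ := hS.subset_closedBall x
  have hbdd : BddAbove (dist x '' S) :=
    ⟨C, forall_mem_image.2 fun z hz => mem_closedBall'.1 (hC hz)⟩
  have hle (z) (hz : z ∈ S) : dist x z ≤ sSup (dist x '' S) := le_csSup hbdd (mem_image_of_mem _ hz)
  have hpos : 0 < sSup (dist x '' S) := (dist_pos.2 hne).trans_le (hle y₀ hy₀)
  obtain ⟨_, ⟨y, hy, rfl⟩, hlt⟩ :=
    exists_lt_of_lt_csSup ⟨_, mem_image_of_mem (dist x) hy₀⟩ (div_lt_self hpos hc)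
  have hthreshold : 0 < sSup (dist x '' S) / c := div_pos hpos (one_pos.trans hc)
  exact ⟨y, hy, dist_pos.1 (hthreshold.trans hlt),
    fun z hz => (hle z hz).trans ((div_lt_iff₀' (by positivity)).1 hlt).le⟩

variable [MeasurableSpace X] {μ : Measure X} {CD CW : ℝ≥0} {s : ℝ} {A : ℝ≥0∞}
  {Y : Type*} [EMetricSpace Y] {e : X → Y}

lemma ediam_image_closedBall_le (hs : 0 < s) {c : X} {r : ℝ}
    (he : ∀ y ∈ closedBall c r, edist (e c) (e y) ≤ A * ballGauge μ s c (dist c y)) :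
    ediam (e '' closedBall c r) ≤ 2 * A * ballGauge μ s c r := by
  have hle (y) (hy : y ∈ closedBall c r) : edist (e c) (e y) ≤ A * ballGauge μ s c r := by
    refine (he y hy).trans ?_
    gcongr
    exact ballGauge_mono hs (by simpa using mem_closedBall'.1 hy)
  refine ediam_le ?_
  rintro _ ⟨y, hy, rfl⟩ _ ⟨z, hz, rfl⟩
  calc edist (e y) (e z) ≤ edist (e c) (e y) + edist (e c) (e z) := edist_triangle_left _ _ _
    _ ≤ A * ballGauge μ s c r + A * ballGauge μ s c r := add_le_add (hle y hy) (hle z hz)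
    _ = 2 * A * ballGauge μ s c r := by ring

variable [MeasurableSpace Y] [BorelSpace Y] [OpensMeasurableSpace X]

lemma IsDoublingWith.hausdorffMeasure_image_le_of_forall_lt (h : IsDoublingWith μ CD) (hs : 0 < s)
    (hsmall : ∀ η : ℝ≥0∞, 0 < η → ∃ ε > 0, ∀ z : X, ballGauge μ s z ε ≤ η) (hA : A ≠ ∞)
    {B U : Set X} (hB : TotallyBounded B) {r : ℝ} (hr : 0 < r) (hU : thickening r B ⊆ U)
    (he : ∀ z ∈ B, ∀ y, dist z y < r → edist (e z) (e y) ≤ A * ballGauge μ s z (dist z y)) :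
    μH[s] (e '' B) ≤ (2 * A) ^ s * CD * μ U := by
  choose ε hε hgauge using fun m : ℕ => hsmall ((m : ℝ≥0∞) + 1)⁻¹ (by simp)
  have hτ (m) : 0 < min (ε m) (r / 2) := lt_min (hε m) (half_pos hr)
  have hτr (m) : min (ε m) (r / 2) < r := (min_le_right _ _).trans_lt (half_lt_self hr)
  choose N hNB hcover hsum using fun m => h.exists_finset_cover hB (hτ m) (U := U)
    (fun c hc => (ball_subset_ball (by linarith [hτ m, hτr m])).trans
      ((ball_subset_thickening hc r).trans hU)) 0
  have hdiam (m) (c : N m) : ediam (e '' closedBall (c : X) (min (ε m) (r / 2))) ≤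
      2 * A * ballGauge μ s (c : X) (min (ε m) (r / 2)) :=
    ediam_image_closedBall_le hs fun y hy =>
      he c (hNB m c.2) y ((mem_closedBall'.1 hy).trans_lt (hτr m))
  have hlim : Tendsto (fun m : ℕ => 2 * A * ((m : ℝ≥0∞) + 1)⁻¹) atTop (𝓝 0) := by
    have hinv := (tendsto_add_atTop_iff_nat 1).2 ENNReal.tendsto_inv_nat_nhds_zero
    simpa using ENNReal.Tendsto.const_mul hinv (a := 2 * A)
      (Or.inr (ENNReal.mul_ne_top ENNReal.ofNat_ne_top hA))
  refine (Measure.hausdorffMeasure_le_liminf_sum s (e '' B) _ hlim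
    (fun m (c : N m) => e '' closedBall (c : X) (min (ε m) (r / 2)))
    (Eventually.of_forall fun m c => (hdiam m c).trans ?_)
    (Eventually.of_forall fun m => ?_)).trans
    (liminf_le_of_le (by isBoundedDefault) fun b hb => ?_)
  · gcongr
    exact (ballGauge_mono hs (by simp)).trans (hgauge m c)
  · rw [← image_iUnion, iUnion_subtype]
    exact image_mono (hcover m)
  · obtain ⟨m, hm⟩ := hb.exists
    refine hm.trans ?_
    calc ∑ c : N m, ediam (e '' closedBall (c : X) (min (ε m) (r / 2))) ^ s
        ≤ ∑ c : N m, (2 * A * ballGauge μ s (c : X) (min (ε m) (r / 2))) ^ s := by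
          gcongr with c
          exact hdiam m c
      _ = (2 * A) ^ s * ∑ c ∈ N m, μ (Metric.ball c (min (ε m) (r / 2))) := by
          simp only [ENNReal.mul_rpow_of_nonneg _ _ hs.le, rpow_ballGauge hs, ← Finset.mul_sum]
          congr 1
          exact Finset.sum_coe_sort (N m) fun c => μ (Metric.ball c (min (ε m) (r / 2)))
      _ ≤ (2 * A) ^ s * CD * μ U := by
          rw [mul_assoc]
          gcongr
          simpa using hsum m

lemma IsDoublingWith.hausdorffMeasure_image_le (h : IsDoublingWith μ CD) (hs : 0 < s)
    (hsmall : ∀ η : ℝ≥0∞, 0 < η → ∃ ε > 0, ∀ z : X, ballGauge μ s z ε ≤ η) (hA : A ≠ ∞)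
    {B U : Set X} (hB : TotallyBounded B) {r : ℝ} (hr : 0 < r) (hU : thickening r B ⊆ U)
    (he : ∀ z ∈ B, ∃ r > 0, ∀ y, dist z y < r →
      edist (e z) (e y) ≤ A * ballGauge μ s z (dist z y)) :
    μH[s] (e '' B) ≤ (2 * A) ^ s * CD * μ U := by
  let G (n : ℕ) : Set X := {z | ∀ y, dist z y < 1 / ((n : ℝ) + 1) →
    edist (e z) (e y) ≤ A * ballGauge μ s z (dist z y)}
  have hmono : Monotone fun n => e '' (B ∩ G n) := fun n m hnm =>
    image_mono (inter_subset_inter_right _ fun z hz y hy =>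
      hz y (hy.trans_le (one_div_le_one_div_of_le (by positivity) (by gcongr))))
  have hcover : e '' B ⊆ ⋃ n, e '' (B ∩ G n) := by
    rintro _ ⟨z, hz, rfl⟩
    obtain ⟨t, ht, hzt⟩ := he z hz
    obtain ⟨n, hn⟩ := exists_nat_one_div_lt ht
    exact mem_iUnion.2 ⟨n, z, ⟨hz, fun y hy => hzt y (hy.trans hn)⟩, rfl⟩
  refine (measure_mono hcover).trans ?_
  rw [hmono.measure_iUnion]
  refine iSup_le fun n => h.hausdorffMeasure_image_le_of_forall_lt hs hsmall hA
    (hB.subset inter_subset_left) (r := min r (1 / ((n : ℝ) + 1))) (by positivity) ?_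
    fun z hz y hy => hz.2 y (hy.trans_le (min_le_right _ _))
  exact ((thickening_mono (min_le_left _ _) _).trans
    (thickening_subset_of_subset r inter_subset_left)).trans hU

lemma IsWMDM.hausdorffMeasure_image_qmu_lt_le (hw : IsWMDM μ s CW) (h : IsDoublingWith μ CD)
    (hs : 0 < s) (hsmall : ∀ η : ℝ≥0∞, 0 < η → ∃ ε > 0, ∀ z : X, ballGauge μ s z ε ≤ η)
    (hX : TotallyBounded (univ : Set X)) (hA : A ≠ ∞)
    (he : ∀ z, ∃ r > 0, ∀ y, dist z y < r → edist (e z) (e y) ≤ A * ballGauge μ s z (dist z y))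
    (x : X) (t : ℝ≥0∞) :
    μH[s] (e '' {y | qmu μ s x y < t}) ≤ (2 * A * CW * t) ^ s * CD ^ 2 := by
  set S := {y | qmu μ s x y < t}
  have hS : TotallyBounded S := hX.subset (subset_univ _)
  by_cases htriv : S ⊆ {x}
  · have := Measure.nullSingletonClass_hausdorff Y hs
    have hzero : μH[s] (e '' S) = 0 := ((subsingleton_singleton.anti htriv).image e).measure_zero _
    exact hzero.trans_le zero_le
  obtain ⟨y₀, hy₀, hne⟩ := not_subset.1 htriv
  obtain ⟨y, hy, hxy, hmax⟩ := exists_forall_dist_le_mul_dist hS.isBounded hy₀ (Ne.symm hne)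
    (c := 3 / 2) (by norm_num)
  have hdist := dist_pos.2 hxy
  have hU : thickening (dist x y / 2) S ⊆ Metric.ball x (2 * dist x y) := by
    intro z hz
    obtain ⟨w, hw, hzw⟩ := mem_thickening_iff.1 hz
    exact mem_ball.2 (by linarith [hmax w hw, dist_triangle z w x, dist_comm w x])
  have hball : μ (Metric.ball x (2 * dist x y)) ≤ CD * (CW * t) ^ s := by
    refine (h.2 x _ hdist).trans ?_
    rw [← rpow_ballGauge hs]
    gcongr
    calc ballGauge μ s x (dist x y) ≤ μ (pairBall x y) ^ (1 / s) :=
          ballGauge_le_rpow_measure_pairBall hs (by simp)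
      _ ≤ CW * qmu μ s x y := hw x y
      _ ≤ CW * t := by gcongr; exact hy.le
  calc μH[s] (e '' S) ≤ (2 * A) ^ s * CD * μ (Metric.ball x (2 * dist x y)) :=
        h.hausdorffMeasure_image_le hs hsmall hA hS (half_pos hdist) hU fun z _ => he z
    _ ≤ (2 * A) ^ s * CD * (CD * (CW * t) ^ s) := by gcongr
    _ = (2 * A * CW * t) ^ s * CD ^ 2 := by
        rw [mul_assoc (2 * A), ENNReal.mul_rpow_of_nonneg (2 * A) _ hs.le]
        ring

end HausdorffMeasure

section AreaBound

lemma le_two_pow_ellOf {lam : ℝ} (hlam : 0 < lam) : lam ≤ 2 ^ ellOf lam := by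
  rw [← Real.rpow_natCast, ← Real.logb_le_iff_le_rpow one_lt_two hlam]
  calc Real.logb 2 lam ≤ ⌈Real.logb 2 lam⌉ := Int.le_ceil _
    _ ≤ (ellOf lam : ℝ) := by exact_mod_cast Int.self_le_toNat _

variable {X : Type*} [MetricSpace X] [MeasurableSpace X] {μ : Measure X} {CD CW : ℝ≥0}

lemma IsDoublingWith.isFiniteMeasure (h : IsDoublingWith μ CD)
    (hX : Bornology.IsBounded (univ : Set X)) : IsFiniteMeasure μ := by
  refine ⟨?_⟩
  rcases isEmpty_or_nonempty X with hempty | ⟨⟨x⟩⟩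
  · simp [univ_eq_empty_iff.2 hempty]
  · obtain ⟨r, hr, hsub⟩ := hX.subset_ball_lt 0 x
    exact (measure_mono hsub).trans_lt (h.1 x r hr).2

lemma nontrivial_of_chartedSpace {W Z : Type*} [NormedAddCommGroup W] [NormedSpace ℝ W]
    [Nontrivial W] [MetricSpace Z] [ChartedSpace W Z] [Nonempty Z] : Nontrivial Z := by
  obtain ⟨z⟩ := ‹Nonempty Z›
  obtain ⟨_, _, j, hj, _⟩ := exists_closedBall_isInChartBall (E := W) z
  exact hj.injective.nontrivial

lemma IsDoublingWith.loewnerConst_le_CSconst [Nontrivial X] [BorelSpace X] [PreconnectedSpace X]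
    (h : IsDoublingWith μ CD) (lam : ℝ) (CW : ℝ≥0) :
    9 * loewnerConst CD CW (ellOf lam) * CD ^ 3 ≤ CSconst lam CD CW * CD := by
  have hlarge : (216 : ℝ≥0∞) ≤ 16 * CD ^ 12 := by
    exact_mod_cast pow_twelve_ge_of_add_one_le_pow_four (c := CD) (mod_cast h.add_one_le_pow_four)
  have hone := h.one_le
  rw [loewnerConst, CSconst]
  calc 9 * (24 * CW * CD ^ (14 + 5 * ellOf lam)) * (CD : ℝ≥0∞) ^ 3
      = 216 * (CW * CD ^ (17 + 5 * ellOf lam)) := by ring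
    _ ≤ 16 * CD ^ 12 * (CW * CD ^ (17 + 5 * ellOf lam)) := by gcongr
    _ = 16 * CW * CD ^ (29 + 5 * ellOf lam) := by ring
    _ ≤ 16 * CW * CD ^ (29 + 16 * ellOf lam) := by gcongr; norm_num
    _ = _ := by ring

lemma hausdorff2_apply (Y : Type*) [EMetricSpace Y] [MeasurableSpace Y] [hY : BorelSpace Y]
    (S : Set Y) : hausdorff2 Y S = ENNReal.ofReal (Real.pi / 4) * μH[2] S := by
  obtain rfl := hY.measurable_eq
  rfl

theorem statement7_general [BorelSpace X] [PreconnectedSpace X] {W : Type*}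
    [NormedAddCommGroup W] [NormedSpace ℝ W] [ProperSpace W] (hW : 1 < Module.rank ℝ W)
    [ChartedSpace W X] (hX : TotallyBounded (univ : Set X)) {lam : ℝ} (hlam : 0 < lam)
    (hLLC : IsLLC X lam) (h : IsDoublingWith μ CD) (hw : IsWMDM μ 2 CW)
    {Y : Type*} [EMetricSpace Y] (e : X → Y) (he : ∀ x y, edist (e x) (e y) = qmu μ 2 x y)
    (x : X) (s : ℝ≥0∞) :
    hausdorff2 Y (e '' {y | qmu μ 2 x y < s}) ≤
      ENNReal.ofReal (2 * Real.pi) * CSconst lam CD CW ^ 2 * CD ^ 4 * CW ^ 2 * s ^ 2 := by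
  let := borel Y
  have := borelSpaceBorel Y
  have := h.isFiniteMeasure hX.isBounded
  have : Nontrivial W := rank_pos_iff_nontrivial.1 (one_pos.trans hW)
  have : Nonempty X := ⟨x⟩
  have : Nontrivial X := nontrivial_of_chartedSpace (W := W)
  have hsmall (η : ℝ≥0∞) (hη : 0 < η) : ∃ ε > 0, ∀ z : X, ballGauge μ 2 z ε ≤ η :=
    h.exists_forall_ballGauge_le two_pos hη
  have hlocal (z : X) : ∃ r > 0, ∀ y, dist z y < r →
      edist (e z) (e y) ≤ CSconst lam CD CW * CD * ballGauge μ 2 z (dist z y) := by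
    obtain ⟨r, hr, hq⟩ := hw.exists_forall_qmu_le h (hLLC.mono hlam (le_two_pow_ellOf hlam))
      hsmall W hW z
    exact ⟨r, hr, fun y hy => (he z y).trans_le <| (hq y hy).trans <|
      mul_le_mul_left (h.loewnerConst_le_CSconst lam CW) _⟩
  have hfinite : CSconst lam CD CW * CD ≠ ∞ := by
    rw [CSconst]
    finiteness
  have hpi : ENNReal.ofReal (Real.pi / 4) * 4 ≤ ENNReal.ofReal (2 * Real.pi) := by
    rw [← ENNReal.ofReal_ofNat 4, ← ENNReal.ofReal_mul (by positivity)]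
    exact ENNReal.ofReal_le_ofReal (by linarith [Real.pi_pos])
  rw [hausdorff2_apply]
  calc ENNReal.ofReal (Real.pi / 4) * μH[2] (e '' {y | qmu μ 2 x y < s})
      ≤ ENNReal.ofReal (Real.pi / 4) *
          ((2 * (CSconst lam CD CW * CD) * CW * s) ^ (2 : ℝ) * CD ^ 2) := by
        gcongr
        exact hw.hausdorffMeasure_image_qmu_lt_le h two_pos hsmall hX hfinite hlocal x s
    _ = ENNReal.ofReal (Real.pi / 4) * 4 *
          (CSconst lam CD CW ^ 2 * CD ^ 4 * CW ^ 2 * s ^ 2) := by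
        rw [ENNReal.rpow_two]
        ring
    _ ≤ ENNReal.ofReal (2 * Real.pi) * (CSconst lam CD CW ^ 2 * CD ^ 4 * CW ^ 2 * s ^ 2) := by
        gcongr
    _ = _ := by ring

end AreaBound

theorem statement7
    {X : Type*} [MetricSpace X] [MeasurableSpace X] [BorelSpace X]
    (lam : ℝ) (CD CW : ℝ≥0) (M : ℕ) (μ : Measure X)
    (hlam : 1 ≤ lam) (hLLC : IsLLC X lam)
    (hhom : ∃ Ω₀ : Set ↥Sphere2, IsCircleDomainS2 Ω₀ ∧ Nonempty (X ≃ₜ ↥Ω₀))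
    (hcpt : CompactSpace (Completion X))
    (hfin : (residComps X).Finite) (hM : (residComps X).ncard = M)
    (hreg : μ.Regular) (hdbl : IsDoublingWith μ CD) (hw : IsWMDM μ 2 CW)
    {Y : Type*} [MetricSpace Y] (e : X ≃ Y)
    (hq : ∀ x y : X, edist (e x) (e y) = qmu μ 2 x y) :
    ∀ (x : X) (s : ℝ≥0), 0 < s →
      hausdorff2 Y ((fun p => e p) '' {y | qmu μ 2 x y < (s : ℝ≥0∞)}) ≤
        ENNReal.ofReal (2 * Real.pi) * CSconst lam CD CW ^ 2 * (CD : ℝ≥0∞) ^ 4 *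
          (CW : ℝ≥0∞) ^ 2 * (s : ℝ≥0∞) ^ 2 := by
  intro x s _
  obtain ⟨Ω, ⟨hΩ, hΩc, _⟩, ⟨f⟩⟩ := hhom
  have : Fact (Module.finrank ℝ (EuclideanSpace ℝ (Fin 3)) = 2 + 1) := ⟨by simp⟩
  let : ChartedSpace (EuclideanSpace ℝ (Fin 2)) X :=
    f.symm.chartedSpace (M := (⟨Ω, hΩ⟩ : TopologicalSpace.Opens ↥Sphere2))
  have : ConnectedSpace ↥Ω := isConnected_iff_connectedSpace.1 hΩc
  have : PreconnectedSpace X := f.symm.surjective.denseRange.preconnectedSpace f.symm.continuous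
  have hX : TotallyBounded (univ : Set X) :=
    totallyBounded_preimage (Completion.isUniformInducing_coe X) isCompact_univ.totallyBounded
  have hrank : 1 < Module.rank ℝ (EuclideanSpace ℝ (Fin 2)) := by
    rw [← Module.finrank_eq_rank]
    simp
  exact statement7_general hrank hX (one_pos.trans_le hlam) hLLC hdbl hw e hq x s

end
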